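/- Let N ≥ 2, k ∈ ℕ and K > 0. There exists a constant R = R(k,K,N) such that the following holds: if Ω ⊆ ℝ^N is an open set of unit volume with λ_k(Ω) ≤ K, then there exists another open set Ω̂ ⊆ ℝ^N, still of unit volume, contained in a cube of side R, and satisfying λ_i(Ω̂) ≤ λ_i(Ω) for every 1 ≤ i ≤ k. -/

import Mathlib

open MeasureTheory Set
open scoped ENNReal

noncomputable section

namespace SpectralMin

/-- Points of `ℝ^N`. -/
abbrev EucN (N : ℕ) := EuclideanSpace ℝ (Fin N)

variable {N : ℕ}

/-- The squared Euclidean norm `|Du(z)|²` of the gradient of `u` at `z`. -/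
def gradSqE (u : EucN N → ℝ) (z : EucN N) : ℝ :=
  ∑ p : Fin N, (fderiv ℝ u z (EuclideanSpace.single p 1)) ^ 2

/-- The Rayleigh quotient `R(u, D) = (∫_D |Du|²) / (∫_D u²)`. -/
def rayleighE (D : Set (EucN N)) (u : EucN N → ℝ) : ℝ :=
  (∫ z in D, gradSqE u z) / (∫ z in D, (u z) ^ 2)

/-- Test functions for `Ω`: smooth functions compactly supported inside `Ω`. -/
def IsTestE (Ω : Set (EucN N)) (φ : EucN N → ℝ) : Prop :=
  ContDiff ℝ (⊤ : ℕ∞) φ ∧ HasCompactSupport φ ∧ tsupport φ ⊆ Ω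

/-- The `k`-th Dirichlet eigenvalue `λ_k(Ω)` of an open set `Ω ⊆ ℝ^N`, via the min-max
(Courant–Fischer) principle over `k`-dimensional subspaces of `C_c^∞(Ω) ⊆ W^{1,2}_0(Ω)`. -/
def eigenvalE (Ω : Set (EucN N)) (k : ℕ) : ℝ :=
  sInf { c : ℝ | ∃ u : Fin k → EucN N → ℝ, (∀ i, IsTestE Ω (u i)) ∧ LinearIndependent ℝ u ∧
    ∀ β : Fin k → ℝ, β ≠ 0 → rayleighE univ (fun z => ∑ i, β i * u i z) ≤ c }


section AbstractSpectral
variable {X : Type*} [AddCommGroup X] [Module ℝ X]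

lemma onf_sum (a : X →ₗ[ℝ] X →ₗ[ℝ] ℝ) {n : ℕ} (e : Fin n → X) (d : Fin n → ℝ)
    (he : ∀ i j, a (e i) (e j) = if i = j then d i else 0) (b c : Fin n → ℝ) :
    a (∑ i, b i • e i) (∑ i, c i • e i) = ∑ i, d i * (b i * c i) := by
  simp only [map_sum, LinearMap.sum_apply, map_smul, LinearMap.smul_apply, smul_eq_mul, he]
  refine Finset.sum_congr rfl fun i _ => ?_
  simp
  ring

lemma diag_family (a Q : X →ₗ[ℝ] X →ₗ[ℝ] ℝ)
    (hQs : ∀ x y, Q x y = Q y x) {n : ℕ} (w : Fin n → X)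
    (hw : ∀ i j, a (w i) (w j) = if i = j then 1 else 0) :
    ∃ (e : Fin n → X) (μ : Fin n → ℝ), (∀ i j, a (e i) (e j) = if i = j then 1 else 0) ∧
      (∀ i j, Q (e i) (e j) = if i = j then μ i else 0) ∧ Monotone μ ∧
      ∑ i, μ i = ∑ i, Q (w i) (w i) ∧ ∀ i, ∃ c : Fin n → ℝ, w i = ∑ j, c j • e j := by
  let A : Matrix (Fin n) (Fin n) ℝ := Matrix.of fun i j => Q (w i) (w j)
  have hA : A.IsHermitian := by
    ext i j
    simp [A, hQs (w j)]
  let b := hA.eigenvectorBasis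
  let μ0 := hA.eigenvalues
  let e0 : Fin n → X := fun j => ∑ i, (b j) i • w i
  have hb : ∀ j l, ∑ i, (b j) i * (b l) i = if j = l then 1 else 0 := by
    intro j l
    have := orthonormal_iff_ite.1 b.orthonormal j l
    rw [← this]
    simp [PiLp.inner_apply, mul_comm]
  have hbb : ∀ i l, ∑ j, (b j) i * (b j) l = if i = l then 1 else 0 := by
    intro i l
    have h := b.sum_repr (EuclideanSpace.single i (1:ℝ))
    have h2 := congrArg (fun v : EuclideanSpace ℝ (Fin n) => v l) h
    simp only [OrthonormalBasis.repr_apply_apply, EuclideanSpace.inner_single_right] at h2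
    simp [eq_comm] at h2
    rw [← h2]
  have ha0 : ∀ j l, a (e0 j) (e0 l) = if j = l then 1 else 0 := by
    intro j l
    rw [← hb]
    have := onf_sum a w (fun _ => 1) hw (b j) (b l)
    simp only [one_mul] at this
    exact this
  have hQ0 : ∀ j l, Q (e0 j) (e0 l) = if j = l then μ0 j else 0 := by
    intro j l
    have h1 : Q (e0 j) (e0 l) = ∑ i, (b j) i * (A.mulVec (b l).ofLp) i := by
      simp only [e0, map_sum, LinearMap.sum_apply, map_smul, LinearMap.smul_apply, smul_eq_mul,
        Matrix.mulVec, dotProduct, A, Matrix.of_apply, Finset.mul_sum]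
      rw [Finset.sum_comm]
      refine Finset.sum_congr rfl fun i _ => Finset.sum_congr rfl fun m _ => by ring
    rw [h1, hA.mulVec_eigenvectorBasis l]
    have : ∑ i, (b j) i * (hA.eigenvalues l • (b l).ofLp) i
        = μ0 l * ∑ i, (b j) i * (b l) i := by
      rw [Finset.mul_sum]
      refine Finset.sum_congr rfl fun i _ => by simp [μ0]; ring
    rw [this, hb]
    by_cases h : j = l <;> simp [h]
  have hw0 : ∀ i, w i = ∑ j, (b j) i • e0 j := by
    intro i
    simp only [e0, Finset.smul_sum, smul_smul]
    rw [Finset.sum_comm]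
    simp only [← Finset.sum_smul, hbb]
    simp
  let σ := Tuple.sort μ0
  refine ⟨e0 ∘ σ, μ0 ∘ σ, ?_, ?_, Tuple.monotone_sort μ0, ?_, ?_⟩
  · intro i j; simp [ha0]
  · intro i j; simp [hQ0]
  · rw [show ∑ i, (μ0 ∘ σ) i = ∑ i, μ0 i from Equiv.sum_comp σ μ0]
    have := hA.trace_eq_sum_eigenvalues
    simp [Matrix.trace, A] at this
    rw [this]
  · intro i
    refine ⟨fun j => (b (σ j)) i, ?_⟩
    rw [hw0 i]
    exact (Equiv.sum_comp σ (fun j => (b j) i • e0 j)).symm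

lemma exists_onf (a : X →ₗ[ℝ] X →ₗ[ℝ] ℝ) (has : ∀ x y, a x y = a y x)
    (hap : ∀ x, x ≠ 0 → 0 < a x x) {ι : Type} [Fintype ι] (v : ι → X) :
    ∃ (n : ℕ) (w : Fin n → X), (∀ i j, a (w i) (w j) = if i = j then 1 else 0) ∧
      ∀ i, v i ∈ Submodule.span ℝ (range w) := by
  let core : InnerProductSpace.Core ℝ X :=
    { inner := fun x y => a x y
      conj_inner_symm := fun x y => by simp [has y x]
      re_inner_nonneg := fun x => by
        by_cases h : x = 0
        · simp [h]
        · simpa using (hap x h).le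
      add_left := fun x y z => by simp
      smul_left := fun x y r => by simp
      definite := fun x h => by
        by_contra h0
        exact (hap x h0).ne' h }
  let _ : NormedAddCommGroup X := core.toNormedAddCommGroup
  let _ : InnerProductSpace ℝ X := InnerProductSpace.ofCore core.toCore
  let W := Submodule.span ℝ (range v)
  have : FiniteDimensional ℝ W := FiniteDimensional.span_of_finite ℝ (finite_range v)
  let b := stdOrthonormalBasis ℝ W
  refine ⟨Module.finrank ℝ W, fun i => (b i : X), ?_, ?_⟩
  · intro i j
    have := orthonormal_iff_ite.1 b.orthonormal i j
    exact this
  · intro i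
    have hi : v i ∈ W := Submodule.subset_span ⟨i, rfl⟩
    have := b.sum_repr ⟨v i, hi⟩
    have h2 := congrArg (Subtype.val) this
    rw [← show _ = v i from h2]
    simp only [Submodule.coe_sum, Submodule.coe_smul]
    exact Submodule.sum_mem _ fun j _ => Submodule.smul_mem _ _ (Submodule.subset_span ⟨j, rfl⟩)

lemma onf_linInd (a : X →ₗ[ℝ] X →ₗ[ℝ] ℝ) {n : ℕ} (e : Fin n → X)
    (he : ∀ i j, a (e i) (e j) = if i = j then 1 else 0) : LinearIndependent ℝ e := by
  rw [Fintype.linearIndependent_iff]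
  intro g hg i
  have := congrArg (fun x => a (e i) x) hg
  simpa [he] using this

lemma ritz_upper (a Q : X →ₗ[ℝ] X →ₗ[ℝ] ℝ)
    (hap : ∀ x, x ≠ 0 → 0 < a x x) {n i : ℕ} (e : Fin n → X) (μ : Fin n → ℝ)
    (hea : ∀ i j, a (e i) (e j) = if i = j then 1 else 0)
    (heQ : ∀ i j, Q (e i) (e j) = if i = j then μ i else 0) (hμ : Monotone μ)
    (v : Fin (i+1) → X) (hv : LinearIndependent ℝ v)
    (hve : ∀ m, v m ∈ Submodule.span ℝ (range e)) (c : ℝ)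
    (hc : ∀ β : Fin (i+1) → ℝ, Q (∑ m, β m • v m) (∑ m, β m • v m)
      ≤ c * a (∑ m, β m • v m) (∑ m, β m • v m)) :
    ∃ h : i < n, μ ⟨i, h⟩ ≤ c := by
  have hin : i < n := by
    have h1 : Module.finrank ℝ (Submodule.span ℝ (range v)) = i + 1 := by
      rw [finrank_span_eq_card hv]; simp
    have : FiniteDimensional ℝ (Submodule.span ℝ (range e)) :=
      FiniteDimensional.span_of_finite ℝ (finite_range e)
    have h2 : Submodule.span ℝ (range v) ≤ Submodule.span ℝ (range e) := by
      rw [Submodule.span_le]; rintro _ ⟨m, rfl⟩; exact hve m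
    have h3 := Submodule.finrank_mono h2
    rw [h1, finrank_span_eq_card (onf_linInd a e hea)] at h3
    simp at h3; omega
  refine ⟨hin, ?_⟩
  let L : (Fin (i+1) → ℝ) →ₗ[ℝ] (Fin i → ℝ) :=
    LinearMap.pi fun l => (a (e ⟨l, l.2.trans hin⟩)).comp
      (Fintype.linearCombination ℝ v)
  have hker : LinearMap.ker L ≠ ⊥ := LinearMap.ker_ne_bot_of_finrank_lt (by simp)
  obtain ⟨β, hβ, hβ0⟩ := Submodule.exists_mem_ne_zero_of_ne_bot hker
  have hL : ∀ l : Fin i, a (e ⟨l, l.2.trans hin⟩) (∑ m, β m • v m) = 0 := fun l =>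
    congrFun (LinearMap.mem_ker.1 hβ) l
  have hx0 : ∑ m, β m • v m ≠ 0 := fun h => hβ0 (by
    ext m; exact Fintype.linearIndependent_iff.1 hv β h m)
  have hcβ := hc β
  have hpos := hap _ hx0
  have hxe : ∑ m, β m • v m ∈ Submodule.span ℝ (range e) :=
    Submodule.sum_mem _ fun m _ => Submodule.smul_mem _ _ (hve m)
  generalize (∑ m, β m • v m) = x at *
  obtain ⟨d, rfl⟩ := (Submodule.mem_span_range_iff_exists_fun ℝ).1 hxe
  have hd : ∀ l : Fin n, a (e l) (∑ j, d j • e j) = d l := by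
    intro l; simp [hea]
  have e1 := onf_sum a e (fun _ => 1) hea d d
  have e2 := onf_sum Q e μ heQ d d
  have : μ ⟨i, hin⟩ * a (∑ j, d j • e j) (∑ j, d j • e j) ≤ Q (∑ j, d j • e j) (∑ j, d j • e j) := by
    rw [e1, e2, Finset.mul_sum]
    refine Finset.sum_le_sum fun l _ => ?_
    by_cases hl : l.1 < i
    · have : d l = 0 := by rw [← hd l]; exact hL ⟨l, hl⟩
      simp [this]
    · have : μ ⟨i, hin⟩ ≤ μ l := hμ (by show i ≤ l.1; omega)
      nlinarith [mul_self_nonneg (d l)]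
  exact le_of_mul_le_mul_right (this.trans hcβ) hpos

/-- Approximate simultaneous eigenvectors for an abstract pair of quadratic forms. -/
theorem abs_spec (a Q : X →ₗ[ℝ] X →ₗ[ℝ] ℝ) (has : ∀ x y, a x y = a y x)
    (hap : ∀ x, x ≠ 0 → 0 < a x x) (hQs : ∀ x y, Q x y = Q y x) (hQ0 : ∀ x, 0 ≤ Q x x)
    (k : ℕ) (lam : Fin k → ℝ)
    (H1 : ∀ i : Fin k, ∀ ε > 0, ∃ v : Fin (i.1+1) → X, LinearIndependent ℝ v ∧
      ∀ β : Fin (i.1+1) → ℝ, Q (∑ m, β m • v m) (∑ m, β m • v m)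
        ≤ (lam i + ε) * a (∑ m, β m • v m) (∑ m, β m • v m))
    (H2 : ∀ i : Fin k, ∀ c, ∀ v : Fin (i.1+1) → X, LinearIndependent ℝ v →
      (∀ β : Fin (i.1+1) → ℝ, Q (∑ m, β m • v m) (∑ m, β m • v m)
        ≤ c * a (∑ m, β m • v m) (∑ m, β m • v m)) → lam i ≤ c)
    (η : ℝ) (hη : 0 < η) :
    ∃ (u : Fin k → X) (μ : Fin k → ℝ), (∀ i j, a (u i) (u j) = if i = j then 1 else 0) ∧
      (∀ i j, Q (u i) (u j) = if i = j then μ i else 0) ∧ Monotone μ ∧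
      (∀ i, lam i ≤ μ i ∧ μ i ≤ lam i + η) ∧
      ∀ v j, (Q (u j) v - μ j * a (u j) v)^2 ≤ η * (Q v v + a v v) := by
  -- lower bounds for Ritz values
  have low : ∀ {n : ℕ} (e : Fin n → X) (μ : Fin n → ℝ),
      (∀ i j, a (e i) (e j) = if i = j then 1 else 0) →
      (∀ i j, Q (e i) (e j) = if i = j then μ i else 0) → Monotone μ →
      ∀ (i : Fin k) (h : i.1 < n), lam i ≤ μ ⟨i, h⟩ := by
    intro n e μ hea heQ hμ i h
    let f : Fin (i.1+1) → X := fun m => e ⟨m, by omega⟩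
    have hfa : ∀ m l, a (f m) (f l) = if m = l then 1 else 0 := by
      intro m l; simp [f, hea, Fin.ext_iff]
    have hfQ : ∀ m l, Q (f m) (f l) = if m = l then μ ⟨m, by omega⟩ else 0 := by
      intro m l; simp [f, heQ, Fin.ext_iff]
    refine H2 i _ f (onf_linInd a f hfa) fun β => ?_
    rw [onf_sum a f (fun _ => 1) hfa, onf_sum Q f _ hfQ, Finset.mul_sum]
    refine Finset.sum_le_sum fun m _ => ?_
    have : μ ⟨m, by omega⟩ ≤ μ ⟨i, h⟩ := hμ (by show m.1 ≤ i.1; omega)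
    nlinarith [mul_self_nonneg (β m)]
  have tr : ∀ w : Fin k → X, (∀ i j, a (w i) (w j) = if i = j then 1 else 0) →
      ∑ i, lam i ≤ ∑ i, Q (w i) (w i) := by
    intro w hw
    obtain ⟨e, μ, hea, heQ, hμ, hs, -⟩ := diag_family a Q hQs w hw
    rw [← hs]
    exact Finset.sum_le_sum fun i _ => low e μ hea heQ hμ i i.2
  set D : ℝ := k + 1 with hD
  have hD1 : 1 ≤ D := by simp [hD]
  set Mx : ℝ := ∑ i, |lam i| + 1 with hMx
  have hMx1 : 1 ≤ Mx := by
    have : 0 ≤ ∑ i, |lam i| := Finset.sum_nonneg fun i _ => abs_nonneg _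
    linarith
  have hlamM : ∀ i, lam i + 1 ≤ Mx := by
    intro i
    have := Finset.single_le_sum (f := fun i => |lam i|) (fun i _ => abs_nonneg _)
      (Finset.mem_univ i)
    linarith [le_abs_self (lam i)]
  obtain ⟨η', hη', hη'1, hη'η, hDη, hDη2⟩ : ∃ η' : ℝ, 0 < η' ∧ η' ≤ 1 ∧ η' ≤ η ∧
      D * η' ≤ 1 ∧ D * η' * (2 + 2 * Mx + 1) ≤ η := by
    have hpos : 0 < D * (2 + 2 * Mx + 1) := by positivity
    refine ⟨min 1 η / (D * (2 + 2 * Mx + 1)), by positivity, ?_, ?_, ?_, ?_⟩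
    · rw [div_le_one hpos]
      nlinarith [min_le_left 1 η]
    · rw [div_le_iff₀ hpos]
      have h1 : 1 ≤ D * (2 + 2 * Mx + 1) := by nlinarith
      nlinarith [min_le_right 1 η]
    · rw [mul_div_assoc', div_le_one hpos]
      nlinarith [min_le_left 1 η]
    · have : D * (min 1 η / (D * (2 + 2 * Mx + 1))) * (2 + 2 * Mx + 1) = min 1 η := by
        field_simp
      rw [this]; exact min_le_right _ _
  choose V hV1 hV2 using fun i => H1 i η' hη'
  obtain ⟨n, w, hw, hwV⟩ := exists_onf a has hap
    (fun p : (Σ i : Fin k, Fin (i.1+1)) => V p.1 p.2)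
  obtain ⟨e, μ, hea, heQ, hμ, -, hwe⟩ := diag_family a Q hQs w hw
  have hspan : Submodule.span ℝ (range w) ≤ Submodule.span ℝ (range e) := by
    rw [Submodule.span_le]
    rintro _ ⟨i, rfl⟩
    obtain ⟨c, hc⟩ := hwe i
    show w i ∈ Submodule.span ℝ (range e)
    rw [hc]
    exact Submodule.sum_mem _ fun j _ => Submodule.smul_mem _ _ (Submodule.subset_span ⟨j, rfl⟩)
  have up : ∀ i : Fin k, ∃ h : i.1 < n, μ ⟨i, h⟩ ≤ lam i + η' := fun i =>
    ritz_upper a Q hap e μ hea heQ hμ (V i) (hV1 i) (fun m => hspan (hwV ⟨i, m⟩)) _ (hV2 i)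
  let u : Fin k → X := fun i => e ⟨i, (up i).1⟩
  let ν : Fin k → ℝ := fun i => μ ⟨i, (up i).1⟩
  have hua : ∀ i j, a (u i) (u j) = if i = j then 1 else 0 := by
    intro i j; simp [u, hea, Fin.ext_iff]
  have huQ : ∀ i j, Q (u i) (u j) = if i = j then ν i else 0 := by
    intro i j; simp [u, ν, heQ, Fin.ext_iff]
  have hν1 : ∀ i, lam i ≤ ν i := fun i => low e μ hea heQ hμ i _
  have hν2 : ∀ i, ν i ≤ lam i + η' := fun i => (up i).2
  have hν0 : ∀ i, 0 ≤ ν i := by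
    intro i; have := hQ0 (u i); rw [huQ] at this; simpa using this
  refine ⟨u, ν, hua, huQ, fun i j hij => hμ hij, fun i => ⟨hν1 i, (hν2 i).trans (by linarith)⟩, ?_⟩
  intro v j
  -- projection
  set p : X := ∑ l, a (u l) v • u l with hp
  set z : X := v - p with hz
  have hap' : ∀ l, a (u l) p = a (u l) v := by intro l; simp [hp, hua]
  have haz : ∀ l, a (u l) z = 0 := by intro l; simp [hz, hap']
  have hQp : Q (u j) p = ν j * a (u j) v := by simp [hp, huQ, mul_comm]
  have hq : Q (u j) v - ν j * a (u j) v = Q (u j) z := by simp [hz, hQp]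
  rw [hq]
  set q := Q (u j) z with hqdef
  have hz0 : 0 ≤ a z z := by
    by_cases h : z = 0
    · simp [h]
    · exact (hap z h).le
  have key : ∀ t : ℝ, 0 ≤ D * η' + 2 * t * q + t^2 * (Q z z + D * η' * a z z) := by
    intro t
    have hs : 0 < 1 + t^2 * a z z := by positivity
    set r := (Real.sqrt (1 + t^2 * a z z))⁻¹ with hr
    have hr2 : r * r * (1 + t^2 * a z z) = 1 := by
      rw [hr, ← mul_inv, Real.mul_self_sqrt hs.le, inv_mul_cancel₀ hs.ne']
    have hjz : a z (u j) = 0 := by rw [has, haz]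
    have hzl : ∀ l, a z (u l) = 0 := fun l => by rw [has, haz]
    have ht := tr (Function.update u j (r • (u j + t • z))) (by
      intro l m
      by_cases hl : l = j
      · by_cases hm : m = j
        · subst hl; subst hm
          simp [hua, haz, hzl]
          linear_combination hr2
        · subst hl
          have hm' : l ≠ m := fun h => hm h.symm
          simp [Function.update_of_ne hm, hm', hua, hzl]
      · by_cases hm : m = j
        · subst hm
          simp [Function.update_of_ne hl, hl, hua, haz]
        · simp [Function.update_of_ne hl, Function.update_of_ne hm, hua])
    have hsum : ∑ i, Q (Function.update u j (r • (u j + t • z)) i)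
        (Function.update u j (r • (u j + t • z)) i)
        = ∑ i, ν i - ν j + r * r * (ν j + 2 * t * q + t^2 * Q z z) := by
      rw [← Finset.add_sum_erase _ _ (Finset.mem_univ j),
        ← Finset.add_sum_erase (a := j) Finset.univ ν (Finset.mem_univ j)]
      have : ∑ x ∈ Finset.univ.erase j, Q (Function.update u j (r • (u j + t • z)) x)
        (Function.update u j (r • (u j + t • z)) x) = ∑ x ∈ Finset.univ.erase j, ν x := by
        refine Finset.sum_congr rfl fun x hx => ?_
        rw [Function.update_of_ne (Finset.ne_of_mem_erase hx), huQ]; simp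
      rw [this]
      have h2 : Q z (u j) = q := by rw [hQs]
      simp [huQ, h2, ← hqdef]
      ring
    rw [hsum] at ht
    have hsl : ∑ i, ν i ≤ ∑ i, lam i + k * η' := by
      calc ∑ i, ν i ≤ ∑ i, (lam i + η') := Finset.sum_le_sum fun i _ => hν2 i
        _ = _ := by simp [Finset.sum_add_distrib]
    have h3 : ν j - k * η' ≤ r * r * (ν j + 2 * t * q + t^2 * Q z z) := by linarith
    have h4 := mul_le_mul_of_nonneg_right h3 hs.le
    have h5 : r * r * (ν j + 2 * t * q + t^2 * Q z z) * (1 + t^2 * a z z)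
        = ν j + 2 * t * q + t^2 * Q z z := by linear_combination (ν j + 2 * t * q + t^2 * Q z z) * hr2
    rw [h5] at h4
    have h6 : 0 ≤ ν j * (t^2 * a z z) := mul_nonneg (hν0 j) (by positivity)
    have h7 : 0 ≤ η' * (1 + t^2 * a z z) := by positivity
    rw [hD]
    nlinarith
  have disc : q^2 ≤ D * η' * (Q z z + D * η' * a z z) := by
    have := discrim_le_zero (a := Q z z + D * η' * a z z) (b := 2 * q) (c := D * η')
      (fun t => by have := key t; nlinarith)
    simp only [discrim] at this
    nlinarith
  -- bounds on z
  have hpp : a p p = ∑ l, (a (u l) v)^2 := by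
    rw [hp, onf_sum a u (fun _ => 1) hua]; simp [sq]
  have hpv : a p v = a p p := by
    have : a p z = 0 := by simp [hp, haz]
    have : a p v - a p p = 0 := by rw [← this, hz]; simp
    linarith
  have hazz : a z z = a v v - a p p := by
    have h1 : a v p = a p p := by rw [has, hpv]
    simp [hz, hpv, h1]
  have hpp0 : 0 ≤ a p p := by rw [hpp]; positivity
  have hQpp : Q p p ≤ Mx * a p p := by
    have e1 := onf_sum Q u ν huQ (fun l => a (u l) v) (fun l => a (u l) v)
    rw [← hp] at e1
    rw [e1, hpp, Finset.mul_sum]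
    refine Finset.sum_le_sum fun l _ => ?_
    have : ν l ≤ Mx := by linarith [hν2 l, hlamM l]
    nlinarith [sq_nonneg (a (u l) v)]
  have hQz : Q z z ≤ 2 * Q v v + 2 * Q p p := by
    have h1 := hQ0 (v + p)
    have h2 := hQs v p
    have h3 : Q z z = Q v v - 2 * Q v p + Q p p := by simp [hz, h2]; ring
    simp [← h2] at h1
    rw [h3]; linarith
  have hv0 : 0 ≤ Q v v := hQ0 v
  have hav : 0 ≤ a v v := by linarith
  have hDp : 0 < D * η' := by positivity
  have b1 : Q z z + D * η' * a z z ≤ 2 * Q v v + (2 * Mx + 1) * a v v := by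
    have c1 : D * η' * a z z ≤ 1 * a z z := mul_le_mul_of_nonneg_right hDη hz0
    have c2 : Mx * a p p ≤ Mx * a v v := mul_le_mul_of_nonneg_left (by linarith) (by linarith)
    linarith
  have b2 : 2 * Q v v + (2 * Mx + 1) * a v v ≤ (2 + 2 * Mx + 1) * (Q v v + a v v) := by
    nlinarith
  calc q^2 ≤ D * η' * (Q z z + D * η' * a z z) := disc
    _ ≤ D * η' * ((2 + 2 * Mx + 1) * (Q v v + a v v)) :=
        mul_le_mul_of_nonneg_left (b1.trans b2) hDp.le
    _ = (D * η' * (2 + 2 * Mx + 1)) * (Q v v + a v v) := by ring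
    _ ≤ η * (Q v v + a v v) := mul_le_mul_of_nonneg_right hDη2 (by linarith)

end AbstractSpectral


section Calculus

/-- Partial derivative. -/
def pdE (u : EucN N → ℝ) (z : EucN N) (p : Fin N) : ℝ :=
  fderiv ℝ u z (EuclideanSpace.single p 1)

/-- Inner product of gradients. -/
def gInE (u v : EucN N → ℝ) (z : EucN N) : ℝ := ∑ p, pdE u z p * pdE v z p

lemma gradSqE_eq (u : EucN N → ℝ) (z : EucN N) : gradSqE u z = gInE u u z := by
  simp [gradSqE, gInE, pdE, sq]

lemma gradSqE_eq' (u : EucN N → ℝ) (z : EucN N) : gradSqE u z = ∑ p, (pdE u z p)^2 := rfl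

lemma gradSqE_nonneg (u : EucN N → ℝ) (z : EucN N) : 0 ≤ gradSqE u z := by
  unfold gradSqE; positivity

lemma gInE_comm (u v : EucN N → ℝ) (z : EucN N) : gInE u v z = gInE v u z := by
  simp [gInE, mul_comm]

lemma pdE_continuous {u : EucN N → ℝ} (hu : ContDiff ℝ (⊤ : ℕ∞) u) (p : Fin N) :
    Continuous (fun z => pdE u z p) :=
  (hu.continuous_fderiv (by simp)).clm_apply continuous_const

lemma gInE_continuous {u v : EucN N → ℝ} (hu : ContDiff ℝ (⊤ : ℕ∞) u)
    (hv : ContDiff ℝ (⊤ : ℕ∞) v) : Continuous (gInE u v) := by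
  unfold gInE
  exact continuous_finsetSum _ fun p _ => (pdE_continuous hu p).mul (pdE_continuous hv p)

lemma gradSqE_continuous {u : EucN N → ℝ} (hu : ContDiff ℝ (⊤ : ℕ∞) u) :
    Continuous (gradSqE u) := by
  have : gradSqE u = gInE u u := funext fun z => gradSqE_eq u z
  rw [this]; exact gInE_continuous hu hu

lemma smooth_diff {u : EucN N → ℝ} (hu : ContDiff ℝ (⊤ : ℕ∞) u) : Differentiable ℝ u :=
  hu.differentiable (by simp)

lemma pdE_add {u v : EucN N → ℝ} (hu : ContDiff ℝ (⊤ : ℕ∞) u) (hv : ContDiff ℝ (⊤ : ℕ∞) v)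
    (z : EucN N) (p : Fin N) : pdE (u + v) z p = pdE u z p + pdE v z p := by
  unfold pdE
  rw [fderiv_add (smooth_diff hu z) (smooth_diff hv z)]; rfl

lemma pdE_smul {u : EucN N → ℝ} (c : ℝ) (hu : ContDiff ℝ (⊤ : ℕ∞) u)
    (z : EucN N) (p : Fin N) : pdE (c • u) z p = c * pdE u z p := by
  unfold pdE
  rw [fderiv_const_smul (smooth_diff hu z)]; rfl

lemma pdE_mul {u v : EucN N → ℝ} (hu : ContDiff ℝ (⊤ : ℕ∞) u) (hv : ContDiff ℝ (⊤ : ℕ∞) v)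
    (z : EucN N) (p : Fin N) :
    pdE (fun x => u x * v x) z p = u z * pdE v z p + v z * pdE u z p := by
  unfold pdE
  rw [fderiv_fun_mul (smooth_diff hu z) (smooth_diff hv z)]; simp

lemma pdE_zero_of_notMem {u : EucN N → ℝ} {z : EucN N} (hz : z ∉ tsupport u) (p : Fin N) :
    pdE u z p = 0 := by
  have : z ∉ tsupport (fderiv ℝ u) := fun h => hz (tsupport_fderiv_subset ℝ h)
  simp [pdE, image_eq_zero_of_notMem_tsupport this]

lemma gInE_zero_of_notMem {u v : EucN N → ℝ} {z : EucN N} (hz : z ∉ tsupport u) :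
    gInE u v z = 0 := by
  simp [gInE, pdE_zero_of_notMem hz]

/-- The gradient of a product with a cut-off function. -/
lemma gradSqE_mul_le {f u : EucN N → ℝ} (hf : ContDiff ℝ (⊤ : ℕ∞) f)
    (hu : ContDiff ℝ (⊤ : ℕ∞) u) (z : EucN N) :
    gradSqE (fun x => f x * u x) z ≤ 2 * (f z)^2 * gradSqE u z + 2 * (u z)^2 * gradSqE f z := by
  simp only [gradSqE_eq', pdE_mul hf hu, Finset.mul_sum, ← Finset.sum_add_distrib]
  refine Finset.sum_le_sum fun p _ => ?_
  nlinarith [sq_nonneg (f z * pdE u z p - u z * pdE f z p)]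

lemma gradSqE_mul_le' {f u : EucN N → ℝ} (hf : ContDiff ℝ (⊤ : ℕ∞) f)
    (hu : ContDiff ℝ (⊤ : ℕ∞) u) (z : EucN N) (h1 : (f z)^2 ≤ 1) :
    gradSqE (fun x => f x * u x) z ≤ 2 * gradSqE u z + 2 * (u z)^2 * gradSqE f z := by
  have := gradSqE_mul_le hf hu z
  have h2 : 2 * (f z)^2 * gradSqE u z ≤ 2 * gradSqE u z := by
    nlinarith [gradSqE_nonneg u z]
  linarith

lemma gInE_cacc {f u : EucN N → ℝ} (hf : ContDiff ℝ (⊤ : ℕ∞) f)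
    (hu : ContDiff ℝ (⊤ : ℕ∞) u) (z : EucN N) :
    (f z)^2 * gradSqE u z ≤ 2 * gInE u (fun x => f x * (f x * u x)) z
      + 4 * (u z)^2 * gradSqE f z := by
  have hfu : ContDiff ℝ (⊤ : ℕ∞) (fun x => f x * u x) := hf.mul hu
  simp only [gradSqE_eq', gInE, pdE_mul hf hu, pdE_mul hf hfu, Finset.mul_sum,
    ← Finset.sum_add_distrib]
  refine Finset.sum_le_sum fun p _ => ?_
  nlinarith [sq_nonneg (f z * pdE u z p + 2 * u z * pdE f z p)]

end Calculus

section Test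

lemma IsTestE.mul_left {Ω : Set (EucN N)} {u f : EucN N → ℝ} (hu : IsTestE Ω u)
    (hf : ContDiff ℝ (⊤ : ℕ∞) f) : IsTestE Ω (fun x => f x * u x) :=
  ⟨hf.mul hu.1, hu.2.1.mul_left, (tsupport_mul_subset_right).trans hu.2.2⟩

lemma IsTestE.mono {Ω Ω' : Set (EucN N)} {u : EucN N → ℝ} (hu : IsTestE Ω u) (h : Ω ⊆ Ω') :
    IsTestE Ω' u := ⟨hu.1, hu.2.1, hu.2.2.trans h⟩

/-- The space of test functions. -/
def testSub (Ω : Set (EucN N)) : Submodule ℝ (EucN N → ℝ) where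
  carrier := {u | IsTestE Ω u}
  add_mem' := fun {u v} hu hv => ⟨hu.1.add hv.1, hu.2.1.add hv.2.1,
    (tsupport_add u v).trans (union_subset hu.2.2 hv.2.2)⟩
  zero_mem' := ⟨contDiff_const, HasCompactSupport.zero, by simp [tsupport]⟩
  smul_mem' := fun c u hu => by
    have := hu.mul_left (f := fun _ => c) contDiff_const
    exact this

lemma mem_testSub {Ω : Set (EucN N)} {u : EucN N → ℝ} : u ∈ testSub Ω ↔ IsTestE Ω u := Iff.rfl

lemma IsTestE.sum {Ω : Set (EucN N)} {i : ℕ} {u : Fin i → EucN N → ℝ} (hu : ∀ j, IsTestE Ω (u j))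
    (β : Fin i → ℝ) : IsTestE Ω (fun z => ∑ j, β j * u j z) := by
  have : (fun z => ∑ j, β j * u j z) = ∑ j, β j • u j := by
    ext z; simp
  rw [this]
  exact (testSub Ω).sum_mem fun j _ => (testSub Ω).smul_mem _ (hu j)

lemma int_mul {Ω : Set (EucN N)} {u v : EucN N → ℝ} (hu : IsTestE Ω u) (hv : Continuous v) :
    Integrable (fun z => u z * v z) :=
  (hu.1.continuous.mul hv).integrable_of_hasCompactSupport hu.2.1.mul_right

lemma int_sq_mul {Ω : Set (EucN N)} {u v : EucN N → ℝ} (hu : IsTestE Ω u) (hv : Continuous v) :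
    Integrable (fun z => (u z)^2 * v z) := by
  have := int_mul hu (hu.1.continuous.mul hv)
  refine this.congr (Filter.Eventually.of_forall fun z => ?_)
  simp only [Pi.mul_apply]; ring

lemma int_sq {Ω : Set (EucN N)} {u : EucN N → ℝ} (hu : IsTestE Ω u) :
    Integrable (fun z => (u z)^2) := by
  simpa using int_sq_mul hu (v := fun _ => 1) continuous_const

lemma gInE_hcs {Ω : Set (EucN N)} {u v : EucN N → ℝ} (hu : IsTestE Ω u) :
    HasCompactSupport (gInE u v) :=
  HasCompactSupport.intro hu.2.1.isCompact fun _ hz => gInE_zero_of_notMem hz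

lemma int_gIn {Ω : Set (EucN N)} {u v : EucN N → ℝ} (hu : IsTestE Ω u)
    (hv : ContDiff ℝ (⊤ : ℕ∞) v) : Integrable (gInE u v) :=
  (gInE_continuous hu.1 hv).integrable_of_hasCompactSupport (gInE_hcs hu)

lemma gradSq_hcs {Ω : Set (EucN N)} {u : EucN N → ℝ} (hu : IsTestE Ω u) :
    HasCompactSupport (gradSqE u) := by
  have : gradSqE u = gInE u u := funext fun z => gradSqE_eq u z
  rw [this]; exact gInE_hcs hu

lemma int_gradSq_mul {Ω : Set (EucN N)} {u v : EucN N → ℝ} (hu : IsTestE Ω u)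
    (hv : Continuous v) : Integrable (fun z => gradSqE u z * v z) :=
  ((gradSqE_continuous hu.1).mul hv).integrable_of_hasCompactSupport (gradSq_hcs hu).mul_right

lemma int_gradSq {Ω : Set (EucN N)} {u : EucN N → ℝ} (hu : IsTestE Ω u) :
    Integrable (gradSqE u) := by
  simpa using int_gradSq_mul hu (v := fun _ => 1) continuous_const

lemma int_sq_pos {Ω : Set (EucN N)} {u : EucN N → ℝ} (hu : IsTestE Ω u) (h0 : u ≠ 0) :
    0 < ∫ z, (u z)^2 := by
  obtain ⟨x, hx⟩ := Function.ne_iff.1 h0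
  refine (hu.1.continuous.pow 2).integral_pos_of_hasCompactSupport_nonneg_nonzero (x := x) ?_ ?_ ?_
  · have : (fun z => u z ^ 2) = u * u := by ext z; simp [sq]
    rw [this]
    exact hu.2.1.mul_right
  · intro z; exact sq_nonneg _
  · simpa using hx

/-- The L2 form. -/
def aForm (Ω : Set (EucN N)) : testSub Ω →ₗ[ℝ] testSub Ω →ₗ[ℝ] ℝ :=
  LinearMap.mk₂ ℝ (fun u v => ∫ z, u.1 z * v.1 z)
    (fun u v w => by
      rw [← integral_add (int_mul u.2 w.2.1.continuous) (int_mul v.2 w.2.1.continuous)]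
      refine integral_congr_ae (Filter.Eventually.of_forall fun z => ?_)
      simp; ring)
    (fun c u v => by
      rw [smul_eq_mul, ← integral_const_mul]
      refine integral_congr_ae (Filter.Eventually.of_forall fun z => ?_)
      simp; ring)
    (fun u v w => by
      rw [← integral_add (int_mul u.2 v.2.1.continuous) (int_mul u.2 w.2.1.continuous)]
      refine integral_congr_ae (Filter.Eventually.of_forall fun z => ?_)
      simp; ring)
    (fun c u v => by
      rw [smul_eq_mul, ← integral_const_mul]
      refine integral_congr_ae (Filter.Eventually.of_forall fun z => ?_)
      simp; ring)

/-- The Dirichlet form. -/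
def qForm (Ω : Set (EucN N)) : testSub Ω →ₗ[ℝ] testSub Ω →ₗ[ℝ] ℝ :=
  LinearMap.mk₂ ℝ (fun u v => ∫ z, gInE u.1 v.1 z)
    (fun u v w => by
      rw [← integral_add (int_gIn u.2 w.2.1) (int_gIn v.2 w.2.1)]
      refine integral_congr_ae (Filter.Eventually.of_forall fun z => ?_)
      simp only [gInE, Submodule.coe_add, pdE_add u.2.1 v.2.1, add_mul, Finset.sum_add_distrib])
    (fun c u v => by
      rw [smul_eq_mul, ← integral_const_mul]
      refine integral_congr_ae (Filter.Eventually.of_forall fun z => ?_)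
      simp only [gInE, Submodule.coe_smul, pdE_smul c u.2.1, Finset.mul_sum, mul_assoc])
    (fun u v w => by
      rw [← integral_add (int_gIn u.2 v.2.1) (int_gIn u.2 w.2.1)]
      refine integral_congr_ae (Filter.Eventually.of_forall fun z => ?_)
      simp only [gInE, Submodule.coe_add, pdE_add v.2.1 w.2.1, mul_add, Finset.sum_add_distrib])
    (fun c u v => by
      rw [smul_eq_mul, ← integral_const_mul]
      refine integral_congr_ae (Filter.Eventually.of_forall fun z => ?_)
      simp only [gInE, Submodule.coe_smul, pdE_smul c v.2.1, Finset.mul_sum]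
      refine Finset.sum_congr rfl fun p _ => by ring)

lemma aForm_apply (Ω : Set (EucN N)) (u v : testSub Ω) :
    aForm Ω u v = ∫ z, u.1 z * v.1 z := rfl

lemma qForm_apply (Ω : Set (EucN N)) (u v : testSub Ω) :
    qForm Ω u v = ∫ z, gInE u.1 v.1 z := rfl

lemma aForm_self (Ω : Set (EucN N)) (u : testSub Ω) :
    aForm Ω u u = ∫ z, (u.1 z)^2 := by simp [aForm_apply, sq]

lemma qForm_self (Ω : Set (EucN N)) (u : testSub Ω) :
    qForm Ω u u = ∫ z, gradSqE u.1 z := by simp [qForm_apply, gradSqE_eq]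

/-- Admissible levels for the min-max value. -/
def AdmE (Ω : Set (EucN N)) (i : ℕ) (c : ℝ) : Prop :=
  ∃ u : Fin i → EucN N → ℝ, (∀ j, IsTestE Ω (u j)) ∧ LinearIndependent ℝ u ∧
    ∀ β : Fin i → ℝ, ∫ z, gradSqE (fun z => ∑ j, β j * u j z) z
      ≤ c * ∫ z, (∑ j, β j * u j z)^2

lemma admE_iff (Ω : Set (EucN N)) (i : ℕ) (c : ℝ) : AdmE Ω i c ↔
    ∃ u : Fin i → EucN N → ℝ, (∀ j, IsTestE Ω (u j)) ∧ LinearIndependent ℝ u ∧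
    ∀ β : Fin i → ℝ, β ≠ 0 → rayleighE univ (fun z => ∑ i, β i * u i z) ≤ c := by
  refine exists_congr fun u => and_congr_right fun hu => and_congr_right fun hli => ?_
  refine forall_congr' fun β => ?_
  by_cases h0 : β = 0
  · subst h0
    have : gradSqE (fun _ : EucN N => (0:ℝ)) = fun _ => 0 := by
      ext z; simp [gradSqE]
    simp [this]
  · have hne : (fun z => ∑ j, β j * u j z) ≠ 0 := by
      intro h
      apply h0
      have := Fintype.linearIndependent_iff.1 hli β (by
        rw [← h]; ext z; simp)
      ext j; exact this j
    have hpos := int_sq_pos (IsTestE.sum hu β) hne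
    simp only [rayleighE, Measure.restrict_univ, h0, ne_eq, not_false_eq_true, forall_const]
    rw [div_le_iff₀ hpos]

lemma AdmE.nonneg {Ω : Set (EucN N)} {i : ℕ} {c : ℝ} (h : AdmE Ω (i+1) c) : 0 ≤ c := by
  obtain ⟨u, hu, -, hR⟩ := (admE_iff _ _ _).1 h
  refine le_trans ?_ (hR (fun _ => 1) (by intro h; simpa using congrFun h 0))
  unfold rayleighE
  refine div_nonneg (integral_nonneg fun z => gradSqE_nonneg _ _) (integral_nonneg fun z => sq_nonneg _)

lemma eigenvalE_eq (Ω : Set (EucN N)) (i : ℕ) : eigenvalE Ω i = sInf {c | AdmE Ω i c} := by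
  simp only [eigenvalE, admE_iff]

lemma eigenvalE_le {Ω : Set (EucN N)} {i : ℕ} {c : ℝ} (h : AdmE Ω (i+1) c) :
    eigenvalE Ω (i+1) ≤ c := by
  rw [eigenvalE_eq]
  exact csInf_le ⟨0, fun c hc => AdmE.nonneg hc⟩ h

lemma AdmE.mono_c {Ω : Set (EucN N)} {i : ℕ} {c d : ℝ} (h : AdmE Ω i c) (hcd : c ≤ d) :
    AdmE Ω i d := by
  obtain ⟨u, hu, hl, hR⟩ := h
  refine ⟨u, hu, hl, fun β => (hR β).trans ?_⟩
  exact mul_le_mul_of_nonneg_right hcd (integral_nonneg fun z => sq_nonneg _)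

lemma AdmE.pred {Ω : Set (EucN N)} {i j : ℕ} {c : ℝ} (h : AdmE Ω j c) (hij : i ≤ j) :
    AdmE Ω i c := by
  obtain ⟨u, hu, hl, hR⟩ := h
  refine ⟨fun m => u (Fin.castLE hij m), fun m => hu _,
    hl.comp _ (Fin.castLE_injective hij), fun β => ?_⟩
  have key : ∀ z, ∑ m, β m * u (Fin.castLE hij m) z
      = ∑ l : Fin j, (if h : l.1 < i then β ⟨l, h⟩ else 0) * u l z := by
    intro z
    symm
    refine Finset.sum_of_injOn (s := (Finset.univ : Finset (Fin i)))
      (t := (Finset.univ : Finset (Fin j))) (Fin.castLE hij) ?_ ?_ ?_ ?_ |>.symm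
    · exact (Fin.castLE_injective hij).injOn
    · intro x _; simp
    · intro l _ hl
      have : ¬ l.1 < i := fun hli => hl ⟨⟨l, hli⟩, by simp, by ext; simp⟩
      simp [this]
    · intro m _; simp
  have := hR (fun l => if h : l.1 < i then β ⟨l, h⟩ else 0)
  simp only [key]
  exact this

lemma exists_adm_lt {Ω : Set (EucN N)} {i : ℕ} (hne : ∃ c, AdmE Ω i c) {ε : ℝ} (hε : 0 < ε) :
    AdmE Ω i (eigenvalE Ω i + ε) := by
  obtain ⟨c, hc, hlt⟩ := exists_lt_of_csInf_lt (s := {c | AdmE Ω i c}) hne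
    (b := eigenvalE Ω i + ε) (by rw [← eigenvalE_eq]; linarith)
  exact AdmE.mono_c hc hlt.le

/-- Approximate eigenfunctions. -/
theorem approx_eigen {Ω : Set (EucN N)} {k : ℕ} (hne : ∃ c, AdmE Ω k c) {η : ℝ} (hη : 0 < η) :
    ∃ (u : Fin k → EucN N → ℝ) (μ : Fin k → ℝ), (∀ j, IsTestE Ω (u j)) ∧
      (∀ i j, ∫ z, u i z * u j z = if i = j then 1 else 0) ∧
      (∀ i j, ∫ z, gInE (u i) (u j) z = if i = j then μ i else 0) ∧ Monotone μ ∧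
      (∀ i, eigenvalE Ω (i.1+1) ≤ μ i ∧ μ i ≤ eigenvalE Ω (i.1+1) + η) ∧
      ∀ v, IsTestE Ω v → ∀ j, ((∫ z, gInE (u j) v z) - μ j * ∫ z, u j z * v z)^2
        ≤ η * ((∫ z, gradSqE v z) + ∫ z, (v z)^2) := by
  have hsumc : ∀ {i : ℕ} (v : Fin i → testSub Ω) (β : Fin i → ℝ),
      ((∑ m, β m • v m : testSub Ω) : EucN N → ℝ) = fun z => ∑ j, β j * (v j).1 z := by
    intro i v β; ext z; simp
  obtain ⟨u, μ, h1, h2, h3, h4, h5⟩ := abs_spec (aForm Ω) (qForm Ω)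
    (fun x y => by simp [aForm_apply, mul_comm])
    (fun x hx => by
      rw [aForm_self]; exact int_sq_pos x.2 (fun h => hx (Subtype.ext h)))
    (fun x y => by simp only [qForm_apply, gInE_comm])
    (fun x => by rw [qForm_self]; exact integral_nonneg fun z => gradSqE_nonneg _ _)
    k (fun i => eigenvalE Ω (i.1+1))
    (fun i ε hε => by
      obtain ⟨c, hc⟩ := hne
      obtain ⟨u, hu, hl, hR⟩ := exists_adm_lt ⟨c, hc.pred (i := i.1+1) i.2⟩ hε
      refine ⟨fun m => ⟨u m, hu m⟩, ?_, fun β => ?_⟩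
      · exact LinearIndependent.of_comp (testSub Ω).subtype hl
      · rw [aForm_self, qForm_self, hsumc]; exact hR β)
    (fun i c v hv hR => by
      refine eigenvalE_le ⟨fun m => (v m).1, fun m => (v m).2, ?_, fun β => ?_⟩
      · exact hv.map' (testSub Ω).subtype (by simp)
      · have := hR β
        rw [aForm_self, qForm_self, hsumc] at this; exact this)
    η hη
  exact ⟨fun j => (u j).1, μ, fun j => (u j).2, h1, h2, h3, h4, fun v hv j => by
    have := h5 ⟨v, hv⟩ j
    rw [aForm_self, qForm_self] at this; exact this⟩

end Test


lemma norm_fderiv_sq_le (u : EucN N → ℝ) (z : EucN N) : ‖fderiv ℝ u z‖^2 ≤ gradSqE u z := by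
  have h : ‖fderiv ℝ u z‖ ≤ Real.sqrt (gradSqE u z) := by
    refine ContinuousLinearMap.opNorm_le_bound _ (Real.sqrt_nonneg _) fun x => ?_
    have hx : x = ∑ p, x p • EuclideanSpace.single p (1:ℝ) := by
      ext q; simp [Pi.single_apply]
    have h1 : fderiv ℝ u z x = ∑ p, x p * pdE u z p := by
      conv_lhs => rw [hx]
      simp [pdE]
    rw [h1, Real.norm_eq_abs, EuclideanSpace.norm_eq, ← Real.sqrt_mul (gradSqE_nonneg _ _)]
    apply Real.abs_le_sqrt
    have := Finset.sum_mul_sq_le_sq_mul_sq Finset.univ (fun p => x p) (fun p => pdE u z p)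
    simp only [Real.norm_eq_abs, sq_abs]
    rw [mul_comm]; exact this
  calc ‖fderiv ℝ u z‖^2 ≤ (Real.sqrt (gradSqE u z))^2 := by gcongr
    _ = _ := Real.sq_sqrt (gradSqE_nonneg _ _)

/-- Poincare inequality for functions supported on sets of small volume. -/
theorem poincare_small (hN : 2 ≤ N) : ∃ C : ℝ, 0 < C ∧ ∀ (v : EucN N → ℝ) (m : ℝ),
    IsTestE univ v → 0 ≤ m → volume (Function.support v) ≤ ENNReal.ofReal m →
    ∫ z, (v z)^2 ≤ C * m^((2:ℝ)/N) * ∫ z, gradSqE v z := by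
  have hN' : (2:ℝ) ≤ N := by exact_mod_cast hN
  set p : NNReal := NNReal.conjExponent N with hp
  have hconj : NNReal.HolderConjugate (Module.finrank ℝ (EucN N)) p := by
    rw [finrank_euclideanSpace_fin]
    exact NNReal.HolderConjugate.conjExponent (by exact_mod_cast hN)
  set C0 : NNReal := eLpNormLESNormFDerivOneConst (volume : Measure (EucN N)) p
  refine ⟨4 * (C0 + 1)^2, by positivity, fun v m hv hm hvol => ?_⟩
  set f : EucN N → ℝ := fun z => v z * v z with hf
  have hft : IsTestE univ f := hv.mul_left hv.1
  have hsob := eLpNorm_le_eLpNorm_fderiv_one (μ := (volume : Measure (EucN N)))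
    (u := f) (hft.1.of_le (by simp)) hft.2.1 hconj
  have hsupp : Function.support f ⊆ Function.support v := by
    intro z hz; simp [hf] at hz ⊢; exact hz
  have hcontf := hft.1.continuous
  have hHol : eLpNorm f 1 volume ≤ eLpNorm f p volume * ENNReal.ofReal (m ^ ((1:ℝ)/N)) := by
    have hms : MeasurableSet (Function.support v) :=
      measurableSet_support hv.1.continuous.measurable
    rw [← eLpNorm_restrict_eq_of_support_subset hsupp,
      ← eLpNorm_restrict_eq_of_support_subset (p := (p : ℝ≥0∞)) hsupp]
    have := eLpNorm_le_eLpNorm_mul_rpow_measure_univ (p := 1) (q := (p : ℝ≥0∞))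
      (μ := volume.restrict (Function.support v)) (f := f) (by exact_mod_cast hconj.symm.lt.le)
      hcontf.aestronglyMeasurable
    refine this.trans ?_
    gcongr
    have hexp : 1 / ENNReal.toReal 1 - 1 / (p : ℝ≥0∞).toReal = 1 / (N:ℝ) := by
      have h1 := hconj.coe.inv_add_inv_eq_one
      rw [finrank_euclideanSpace_fin] at h1
      simp at h1 ⊢
      linarith
    rw [hexp, Measure.restrict_apply_univ, ← ENNReal.ofReal_rpow_of_nonneg hm (by positivity)]
    exact ENNReal.rpow_le_rpow hvol (by positivity)
  set a := ∫ z, (v z)^2 with ha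
  set b := ∫ z, gradSqE v z with hb
  have ha0 : 0 ≤ a := integral_nonneg fun z => sq_nonneg _
  have hb0 : 0 ≤ b := integral_nonneg fun z => gradSqE_nonneg _ _
  have hfa : eLpNorm f 1 volume = ENNReal.ofReal a := by
    rw [eLpNorm_one_eq_lintegral_enorm, ha, ofReal_integral_eq_lintegral_ofReal (int_sq hv)
      (Filter.Eventually.of_forall fun z => sq_nonneg _)]
    refine lintegral_congr fun z => ?_
    rw [← ofReal_norm, hf]
    simp [← sq]
  have hDint : Integrable (fun z => ‖fderiv ℝ f z‖) :=
    (((hft.1.continuous_fderiv (by simp)).integrable_of_hasCompactSupport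
      (hft.2.1.fderiv ℝ))).norm
  have hDf : eLpNorm (fderiv ℝ f) 1 volume = ENNReal.ofReal (∫ z, ‖fderiv ℝ f z‖) := by
    rw [eLpNorm_one_eq_lintegral_enorm, ofReal_integral_eq_lintegral_ofReal hDint
      (Filter.Eventually.of_forall fun z => norm_nonneg _)]
    refine lintegral_congr fun z => ?_
    rw [← ofReal_norm]
  set J := ∫ z, ‖fderiv ℝ f z‖ with hJ
  have hJ0 : 0 ≤ J := integral_nonneg fun z => norm_nonneg _
  set c := ((C0:ℝ) + 1) * m ^ ((1:ℝ)/N) with hc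
  have hc0 : 0 ≤ c := by positivity
  have hmain : a ≤ c * J := by
    have h1 : ENNReal.ofReal a ≤ ENNReal.ofReal (c * J) := by
      calc ENNReal.ofReal a = eLpNorm f 1 volume := hfa.symm
        _ ≤ eLpNorm f p volume * ENNReal.ofReal (m ^ ((1:ℝ)/N)) := hHol
        _ ≤ (C0 * ENNReal.ofReal J) * ENNReal.ofReal (m ^ ((1:ℝ)/N)) := by
            gcongr; rw [← hDf]; exact hsob
        _ = ENNReal.ofReal ((C0 * J) * m ^ ((1:ℝ)/N)) := by
            rw [ENNReal.ofReal_mul (by positivity), ENNReal.ofReal_mul (by positivity)]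
            simp
        _ ≤ _ := by
            apply ENNReal.ofReal_le_ofReal
            rw [hc]
            have : 0 ≤ J * m ^ ((1:ℝ)/N) := by positivity
            nlinarith
    exact (ENNReal.ofReal_le_ofReal_iff (by positivity)).1 h1
  have hJle : ∀ t > 0, J ≤ t * a + t⁻¹ * b := by
    intro t ht
    rw [ha, hb, ← integral_const_mul, ← integral_const_mul, ← integral_add
      ((int_sq hv).const_mul _) ((int_gradSq hv).const_mul _)]
    refine integral_mono hDint (((int_sq hv).const_mul _).add ((int_gradSq hv).const_mul _))
      fun z => ?_
    have hd : fderiv ℝ f z = (2 * v z) • fderiv ℝ v z := by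
      rw [hf, fderiv_fun_mul (smooth_diff hv.1 z) (smooth_diff hv.1 z)]
      ext x; simp; ring
    beta_reduce
    rw [hd, norm_smul, Real.norm_eq_abs, abs_mul, abs_two]
    have h1 := norm_fderiv_sq_le v z
    have h2 : t⁻¹ * ‖fderiv ℝ v z‖^2 ≤ t⁻¹ * gradSqE v z := by gcongr
    have h3 : 0 ≤ t⁻¹ * (t * |v z| - ‖fderiv ℝ v z‖)^2 := by positivity
    have h4 : t⁻¹ * (t * |v z| - ‖fderiv ℝ v z‖)^2
        = t * (v z)^2 - 2 * |v z| * ‖fderiv ℝ v z‖ + t⁻¹ * ‖fderiv ℝ v z‖^2 := by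
      rw [← sq_abs (v z)]; field_simp; ring
    linarith
  have hres : a ≤ 4 * c^2 * b := by
    rcases hc0.eq_or_lt with h | h
    · rw [← h] at hmain ⊢; simpa using hmain
    · have h1 := hJle (2 * c)⁻¹ (by positivity)
      have h2 : c * J ≤ c * ((2 * c)⁻¹ * a + ((2 * c)⁻¹)⁻¹ * b) := by gcongr
      have h3 : c * ((2 * c)⁻¹ * a + ((2 * c)⁻¹)⁻¹ * b) = a / 2 + 2 * c^2 * b := by
        field_simp
      linarith
  refine hres.trans (le_of_eq ?_)
  rw [hc, mul_pow, ← Real.rpow_natCast (m ^ ((1:ℝ)/N)), ← Real.rpow_mul hm]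
  have : (1:ℝ)/N * ((2:ℕ):ℝ) = 2 / N := by push_cast; ring
  rw [this]; ring



lemma smoothTransition_deriv_bound : ∃ B : ℝ, 0 < B ∧ ∀ x, |deriv Real.smoothTransition x| ≤ B := by
  have hc : Continuous (deriv Real.smoothTransition) :=
    (Real.smoothTransition.contDiff (n := 1)).continuous_deriv (by simp)
  obtain ⟨B, hB⟩ := (isCompact_Icc (a := (0:ℝ)) (b := 1)).exists_bound_of_continuousOn
    hc.continuousOn
  refine ⟨|B| + 1, by positivity, fun x => ?_⟩
  by_cases h0 : x ≤ 0
  · have : IsLocalMin Real.smoothTransition x := Filter.Eventually.of_forall fun y => by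
      rw [Real.smoothTransition.zero_of_nonpos h0]; exact Real.smoothTransition.nonneg y
    rw [this.deriv_eq_zero]; simp; positivity
  · by_cases h1 : 1 ≤ x
    · have : IsLocalMax Real.smoothTransition x := Filter.Eventually.of_forall fun y => by
        rw [Real.smoothTransition.one_of_one_le h1]; exact Real.smoothTransition.le_one y
      rw [this.deriv_eq_zero]; simp; positivity
    · have := hB x ⟨by linarith, by linarith⟩
      rw [Real.norm_eq_abs] at this
      linarith [le_abs_self B]

/-- Cut-off function along a smooth function. -/
def cutE (g : EucN N → ℝ) (s w : ℝ) : EucN N → ℝ :=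
  fun x => Real.smoothTransition ((g x - s) / w)

/-- A smooth function with gradient bounded by a dimensional constant. -/
def GoodE (g : EucN N → ℝ) : Prop :=
  ContDiff ℝ (⊤ : ℕ∞) g ∧ ∀ z, gradSqE g z ≤ N

lemma cutE_smooth {g : EucN N → ℝ} (hg : GoodE g) (s w : ℝ) :
    ContDiff ℝ (⊤ : ℕ∞) (cutE g s w) :=
  Real.smoothTransition.contDiff.comp ((hg.1.sub contDiff_const).div_const w)

lemma cutE_nonneg (g : EucN N → ℝ) (s w : ℝ) (z) : 0 ≤ cutE g s w z :=
  Real.smoothTransition.nonneg _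

lemma cutE_le_one (g : EucN N → ℝ) (s w : ℝ) (z) : cutE g s w z ≤ 1 :=
  Real.smoothTransition.le_one _

lemma cutE_sq_le_one (g : EucN N → ℝ) (s w : ℝ) (z) : (cutE g s w z)^2 ≤ 1 := by
  have h1 := cutE_nonneg g s w z
  have h2 := cutE_le_one g s w z
  nlinarith

lemma cutE_zero {g : EucN N → ℝ} {s w : ℝ} (hw : 0 < w) {z} (h : g z ≤ s) : cutE g s w z = 0 :=
  Real.smoothTransition.zero_of_nonpos (div_nonpos_of_nonpos_of_nonneg (by linarith) hw.le)

lemma cutE_one {g : EucN N → ℝ} {s w : ℝ} (hw : 0 < w) {z} (h : s + w ≤ g z) :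
    cutE g s w z = 1 :=
  Real.smoothTransition.one_of_one_le (by rw [le_div_iff₀ hw]; linarith)

lemma cutE_grad_zero {g : EucN N → ℝ} {s w : ℝ} (hw : 0 < w) {z} (h : g z ≤ s) :
    gradSqE (cutE g s w) z = 0 := by
  have : IsLocalMin (cutE g s w) z := Filter.Eventually.of_forall fun y => by
    rw [cutE_zero hw h]; exact cutE_nonneg _ _ _ _
  simp [gradSqE, this.fderiv_eq_zero]

variable (N) in
lemma cutE_grad : ∃ Cg : ℝ, 1 ≤ Cg ∧ ∀ (g : EucN N → ℝ), GoodE g → ∀ s w : ℝ, 0 < w → ∀ z,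
    gradSqE (cutE g s w) z ≤ Cg / w^2 := by
  obtain ⟨B, hB, hBd⟩ := smoothTransition_deriv_bound
  refine ⟨B^2 * N + 1, by nlinarith [sq_nonneg B, (Nat.cast_nonneg N : (0:ℝ) ≤ N), mul_nonneg (sq_nonneg B) (Nat.cast_nonneg N : (0:ℝ) ≤ N)],
    fun g hg s w hw z => ?_⟩
  have hpd : ∀ p, pdE (cutE g s w) z p
      = deriv Real.smoothTransition ((g z - s) / w) * (pdE g z p / w) := by
    intro p
    have h1 : HasFDerivAt (fun x => (g x - s) / w) ((w⁻¹) • fderiv ℝ g z) z := by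
      have := (((smooth_diff hg.1) z).hasFDerivAt.sub_const s).const_smul (w⁻¹)
      refine this.congr_of_eventuallyEq (Filter.Eventually.of_forall fun x => ?_)
      simp [div_eq_inv_mul]
    have h2 : HasDerivAt Real.smoothTransition (deriv Real.smoothTransition ((g z - s) / w))
        ((g z - s) / w) :=
      ((Real.smoothTransition.contDiff (n := 1)).differentiable (by simp) _).hasDerivAt
    have h3 := h2.comp_hasFDerivAt z h1
    have h4 : fderiv ℝ (cutE g s w) z = _ := h3.fderiv
    unfold pdE
    rw [h4]
    simp [div_eq_inv_mul]
  simp only [gradSqE_eq', hpd]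
  have h5 := hg.2 z
  rw [gradSqE_eq'] at h5
  have h6 : ∑ p, (deriv Real.smoothTransition ((g z - s) / w) * (pdE g z p / w))^2
      = (deriv Real.smoothTransition ((g z - s) / w))^2 / w^2 * ∑ p, (pdE g z p)^2 := by
    rw [Finset.mul_sum]; refine Finset.sum_congr rfl fun p _ => by field_simp
  rw [h6]
  have h7 : (deriv Real.smoothTransition ((g z - s) / w))^2 ≤ B^2 :=
    sq_le_sq' (by linarith [neg_abs_le (deriv Real.smoothTransition ((g z - s) / w)), hBd ((g z - s) / w)])
      ((le_abs_self _).trans (hBd _))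
  calc (deriv Real.smoothTransition ((g z - s) / w))^2 / w^2 * ∑ p, (pdE g z p)^2
      ≤ B^2 / w^2 * N := by
        gcongr
    _ ≤ (B^2 * N + 1) / w^2 := by
        rw [div_mul_eq_mul_div]; gcongr; linarith

lemma conv_int {h1 h2 : EucN N → ℝ} (i1 : Integrable h1) (i2 : Integrable h2) :
    Integrable (fun y => ∫ x, h1 x * h2 (x - y)) ∧
      ∫ y, ∫ x, h1 x * h2 (x - y) = (∫ x, h1 x) * ∫ x, h2 x := by
  have i2' : Integrable (fun x => h2 (-x)) := i2.comp_neg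
  have e : (fun y => ∫ x, h1 x * h2 (x - y))
      = MeasureTheory.convolution h1 (fun x => h2 (-x)) (ContinuousLinearMap.mul ℝ ℝ) volume := by
    ext y; simp [MeasureTheory.convolution]
  have e2 := MeasureTheory.integral_convolution (ContinuousLinearMap.mul ℝ ℝ) (μ := volume)
    (ν := volume) i1 i2'
  constructor
  · rw [e]; exact i1.integrable_convolution _ i2'
  · rw [e, e2, integral_neg_eq_self]; rfl

/-- Poincare inequality for functions whose support has locally small volume. -/
theorem poincare_local (hN : 2 ≤ N) : ∃ C : ℝ, 0 < C ∧ ∀ (v : EucN N → ℝ) (m : ℝ),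
    IsTestE univ v → 0 ≤ m →
    (∀ y, volume (Function.support v ∩ Metric.ball y 1) ≤ ENNReal.ofReal m) →
    ∫ z, (v z)^2 ≤ C * m^((2:ℝ)/N) * ((∫ z, gradSqE v z) + ∫ z, (v z)^2) := by
  obtain ⟨C, hC, hP⟩ := poincare_small hN
  let b : ContDiffBump (0 : EucN N) := ⟨1/2, 1, by norm_num, by norm_num⟩
  have hbs : ContDiff ℝ (⊤ : ℕ∞) (b : EucN N → ℝ) := b.contDiff
  have hbt : IsTestE univ (b : EucN N → ℝ) := ⟨hbs, b.hasCompactSupport, subset_univ _⟩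
  set A := ∫ z, (b z)^2 with hA
  set G := ∫ z, gradSqE b z with hG
  have hA0 : 0 < A := int_sq_pos hbt (by
    intro h
    have h1 : b (0 : EucN N) = 1 := b.one_of_mem_closedBall (by simp [b.rIn_pos.le])
    rw [h] at h1; simp at h1)
  have hG0 : 0 ≤ G := integral_nonneg fun z => gradSqE_nonneg _ _
  refine ⟨C * (2 * (A + G) / A), by positivity, fun v m hv hm hvol => ?_⟩
  have hsh : ∀ y : EucN N, ContDiff ℝ (⊤ : ℕ∞) (fun x => b (x - y)) := fun y =>
    hbs.comp (contDiff_id.sub contDiff_const)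
  have hgr : ∀ y z : EucN N, gradSqE (fun x => b (x - y)) z = gradSqE b (z - y) := by
    intro y z; simp [gradSqE, fderiv_comp_sub]
  have step : ∀ y, ∫ x, (v x)^2 * (b (x - y))^2 ≤ C * m^((2:ℝ)/N) *
      (2 * (∫ x, gradSqE v x * (b (x - y))^2) + 2 * ∫ x, (v x)^2 * gradSqE b (x - y)) := by
    intro y
    have hvt : IsTestE univ (fun x => b (x - y) * v x) := hv.mul_left (hsh y)
    have := hP _ m hvt hm (by
      refine (measure_mono ?_).trans (hvol y)
      intro x hx
      have hx' : b (x - y) ≠ 0 ∧ v x ≠ 0 := by simpa using hx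
      refine ⟨hx'.2, ?_⟩
      have : x - y ∈ Function.support b := hx'.1
      rw [b.support_eq] at this
      simpa [dist_eq_norm] using this)
    have e1 : ∫ x, (b (x - y) * v x)^2 = ∫ x, (v x)^2 * (b (x - y))^2 := by
      congr 1; ext x; ring
    rw [e1] at this
    refine this.trans ?_
    gcongr
    have c1 : Continuous fun x => (b (x - y))^2 := (hsh y).continuous.pow 2
    have c2 : Continuous fun x => gradSqE b (x - y) :=
      (gradSqE_continuous hbs).comp (continuous_id.sub continuous_const)
    rw [← integral_const_mul, ← integral_const_mul, ← integral_add
      ((int_gradSq_mul hv c1).const_mul 2) ((int_sq_mul hv c2).const_mul 2)]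
    refine integral_mono (int_gradSq hvt) (((int_gradSq_mul hv c1).const_mul 2).add
      ((int_sq_mul hv c2).const_mul 2)) fun z => ?_
    have := gradSqE_mul_le (hsh y) hv.1 z
    rw [hgr] at this
    show gradSqE (fun x => b (x - y) * v x) z ≤ 2 * (gradSqE v z * b (z - y) ^ 2)
      + 2 * (v z ^ 2 * gradSqE b (z - y))
    linarith
  have i1 := conv_int (int_sq hv) (int_sq hbt)
  have i2 := conv_int (int_gradSq hv) (int_sq hbt)
  have i3 := conv_int (int_sq hv) (int_gradSq hbt)
  have hintg := integral_mono i1.1 (((i2.1.const_mul 2).add (i3.1.const_mul 2)).const_mul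
    (C * m^((2:ℝ)/N))) step
  rw [i1.2, integral_const_mul] at hintg
  simp only [Pi.add_apply] at hintg
  rw [integral_add (i2.1.const_mul 2) (i3.1.const_mul 2), integral_const_mul, integral_const_mul,
    i2.2, i3.2, ← hA, ← hG] at hintg
  set a := ∫ z, (v z)^2
  set d := ∫ z, gradSqE v z
  have ha0 : 0 ≤ a := integral_nonneg fun z => sq_nonneg _
  have hd0 : 0 ≤ d := integral_nonneg fun z => gradSqE_nonneg _ _
  have h9 : a * A ≤ C * m^((2:ℝ)/N) * (2 * (A + G) * (d + a)) := by
    refine hintg.trans ?_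
    gcongr
    nlinarith [mul_nonneg hA0.le ha0, mul_nonneg hG0 hd0]
  calc a = a * A / A := by field_simp
    _ ≤ C * m^((2:ℝ)/N) * (2 * (A + G) * (d + a)) / A := by gcongr
    _ = _ := by ring



/-- Superlevel sets. -/
def supE (g : EucN N → ℝ) (s : ℝ) : Set (EucN N) := {z | s ≤ g z}

lemma supE_meas {g : EucN N → ℝ} (hg : GoodE g) (s : ℝ) : MeasurableSet (supE g s) :=
  measurableSet_le measurable_const hg.1.continuous.measurable

lemma supE_anti (g : EucN N → ℝ) {s t : ℝ} (h : s ≤ t) : supE g t ⊆ supE g s :=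
  fun _ hz => h.trans hz

lemma set_int_le {S : Set (EucN N)} (hS : MeasurableSet S) {F H : EucN N → ℝ} (hF : Integrable F)
    (hH : Integrable H) (h : ∀ z ∈ S, F z ≤ H z) (h0 : ∀ z, 0 ≤ H z) :
    ∫ z in S, F z ≤ ∫ z, H z :=
  (setIntegral_mono_on hF.integrableOn hH.integrableOn hS h).trans
    (setIntegral_le_integral hH (Filter.Eventually.of_forall h0))

lemma int_le_set {S : Set (EucN N)} (hS : MeasurableSet S) {F H : EucN N → ℝ} (hF : Integrable F)
    (hH : Integrable H) (h : ∀ z ∈ S, H z ≤ F z) (h0 : ∀ z, z ∉ S → H z ≤ 0) :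
    ∫ z, H z ≤ ∫ z in S, F z := by
  rw [← integral_indicator hS]
  refine integral_mono hH (hF.indicator hS) fun z => ?_
  by_cases hz : z ∈ S
  · simp [hz, h z hz]
  · simp [hz, h0 z hz]

/-- L2 mass of `u` on the superlevel set. -/
def Us (u g : EucN N → ℝ) (s : ℝ) : ℝ := ∫ z in supE g s, (u z)^2
/-- Dirichlet energy of `u` on the superlevel set. -/
def Ds (u g : EucN N → ℝ) (s : ℝ) : ℝ := ∫ z in supE g s, gradSqE u z

lemma Us_nonneg (u g : EucN N → ℝ) (s : ℝ) : 0 ≤ Us u g s := integral_nonneg fun _ => sq_nonneg _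
lemma Ds_nonneg (u g : EucN N → ℝ) (s : ℝ) : 0 ≤ Ds u g s :=
  integral_nonneg fun _ => gradSqE_nonneg _ _

lemma Us_anti {Ω : Set (EucN N)} {u g : EucN N → ℝ} (hu : IsTestE Ω u) {s t : ℝ}
    (h : s ≤ t) : Us u g t ≤ Us u g s :=
  setIntegral_mono_set (int_sq hu).integrableOn (Filter.Eventually.of_forall fun _ => sq_nonneg _)
    (Filter.Eventually.of_forall (supE_anti g h))

lemma Ds_anti {Ω : Set (EucN N)} {u g : EucN N → ℝ} (hu : IsTestE Ω u) {s t : ℝ}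
    (h : s ≤ t) : Ds u g t ≤ Ds u g s :=
  setIntegral_mono_set (int_gradSq hu).integrableOn
    (Filter.Eventually.of_forall fun _ => gradSqE_nonneg _ _)
    (Filter.Eventually.of_forall (supE_anti g h))

lemma Us_le {Ω : Set (EucN N)} {u g : EucN N → ℝ} (hu : IsTestE Ω u) (s : ℝ) :
    Us u g s ≤ ∫ z, (u z)^2 :=
  setIntegral_le_integral (int_sq hu) (Filter.Eventually.of_forall fun _ => sq_nonneg _)

lemma Ds_le {Ω : Set (EucN N)} {u g : EucN N → ℝ} (hu : IsTestE Ω u) (s : ℝ) :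
    Ds u g s ≤ ∫ z, gradSqE u z :=
  setIntegral_le_integral (int_gradSq hu) (Filter.Eventually.of_forall fun _ => gradSqE_nonneg _ _)

/-- Caccioppoli inequality for a single approximate eigenfunction. -/
lemma cacc1 {Ω : Set (EucN N)} {u g : EucN N → ℝ} (hu : IsTestE Ω u) (hg : GoodE g)
    {Cg : ℝ} (hCg : 1 ≤ Cg) (hCgg : ∀ s w : ℝ, 0 < w → ∀ z, gradSqE (cutE g s w) z ≤ Cg / w^2)
    {μ M η : ℝ} (hη : 0 ≤ η) (hM0 : 0 ≤ M) (hμ0 : 0 ≤ μ) (hμ : μ ≤ M) (hu1 : ∫ z, (u z)^2 ≤ 1)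
    (huM : ∫ z, gradSqE u z ≤ M)
    (hw : ∀ v, IsTestE Ω v → ((∫ z, gInE u v z) - μ * ∫ z, u z * v z)^2 ≤
      η * ((∫ z, gradSqE v z) + ∫ z, (v z)^2)) {s w : ℝ} (hw0 : 0 < w) (hw1 : w ≤ 1) :
    Us u g (s+w) + Ds u g (s+w) ≤ (2*M+4*Cg+1)/w^2 * Us u g s
      + 2 * √(4*M+6*Cg+1) * √η / w := by
  set f := cutE g s w with hf
  have hfs : ContDiff ℝ (⊤ : ℕ∞) f := cutE_smooth hg s w
  have hf1 : ∀ z, (f z)^2 ≤ 1 := cutE_sq_le_one g s w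
  have hfG : ∀ z, gradSqE f z ≤ Cg/w^2 := hCgg s w hw0
  have hG0 : 0 ≤ Cg/w^2 := by positivity
  have hfu : IsTestE Ω (fun x => f x * u x) := hu.mul_left hfs
  have hv : IsTestE Ω (fun x => f x * (f x * u x)) := hfu.mul_left hfs
  have hS := supE_meas hg s
  have hoff : ∀ z, z ∉ supE g s → f z = 0 ∧ gradSqE f z = 0 := by
    intro z hz
    have : g z ≤ s := (not_le.mp hz).le
    exact ⟨cutE_zero hw0 this, cutE_grad_zero hw0 this⟩
  -- step 1
  have h1 : Ds u g (s+w) ≤ ∫ z, gradSqE u z * (f z)^2 := by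
    refine set_int_le (supE_meas hg _) (int_gradSq hu) (int_gradSq_mul hu (hfs.continuous.pow 2))
      (fun z hz => ?_) (fun z => mul_nonneg (gradSqE_nonneg _ _) (sq_nonneg _))
    rw [show f z = 1 from cutE_one hw0 hz]; simp
  have h2 : ∫ z, gradSqE u z * (f z)^2 ≤ 2 * (∫ z, gInE u (fun x => f x * (f x * u x)) z)
      + 4 * ∫ z, (u z)^2 * gradSqE f z := by
    rw [← integral_const_mul, ← integral_const_mul, ← integral_add ((int_gIn hu hv.1).const_mul _)
      ((int_sq_mul hu (gradSqE_continuous hfs)).const_mul _)]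
    refine integral_mono (int_gradSq_mul hu (hfs.continuous.pow 2))
      (((int_gIn hu hv.1).const_mul _).add ((int_sq_mul hu (gradSqE_continuous hfs)).const_mul _))
      fun z => ?_
    have := gInE_cacc hfs hu.1 z
    linarith
  have h3 : ∫ z, (u z)^2 * gradSqE f z ≤ Cg/w^2 * Us u g s := by
    unfold Us; rw [← integral_const_mul]
    refine int_le_set hS ((int_sq hu).const_mul _) (int_sq_mul hu (gradSqE_continuous hfs))
      (fun z _ => ?_) (fun z hz => by rw [(hoff z hz).2]; simp)
    have := hfG z; have := sq_nonneg (u z); nlinarith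
  have h4 : ∫ z, u z * (f z * (f z * u z)) ≤ Us u g s := by
    refine int_le_set hS (int_sq hu) (int_mul hu hv.1.continuous)
      (fun z _ => ?_) (fun z hz => by rw [(hoff z hz).1]; simp)
    have := hf1 z; have := sq_nonneg (u z); nlinarith
  have h5 : ∫ z, (f z * (f z * u z))^2 ≤ 1 := by
    refine le_trans (integral_mono (int_sq hv) (int_sq hu) fun z => ?_) hu1
    have a := hf1 z
    have b := sq_nonneg (f z)
    have : ((f z)^2)^2 ≤ 1 := by nlinarith
    show (f z * (f z * u z))^2 ≤ (u z)^2
    have := mul_le_mul_of_nonneg_right this (sq_nonneg (u z))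
    nlinarith
  have h6 : ∫ z, gradSqE (fun x => f x * (f x * u x)) z ≤ 4*M + 6*(Cg/w^2) := by
    have : ∫ z, gradSqE (fun x => f x * (f x * u x)) z ≤
        ∫ z, (4 * gradSqE u z + 6*(Cg/w^2) * (u z)^2) := by
      refine integral_mono (int_gradSq hv) (((int_gradSq hu).const_mul _).add
        ((int_sq hu).const_mul _)) fun z => ?_
      have a := gradSqE_mul_le' hfs hfu.1 z (hf1 z)
      have b := gradSqE_mul_le' hfs hu.1 z (hf1 z)
      have c := hfG z
      have d := gradSqE_nonneg f z
      have e := hf1 z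
      have i1 : (u z)^2 * gradSqE f z ≤ (u z)^2 * (Cg/w^2) := by gcongr
      have i2 : (f z * u z)^2 ≤ (u z)^2 := by
        rw [mul_pow]; nlinarith [sq_nonneg (u z)]
      have i3 : (f z * u z)^2 * gradSqE f z ≤ (u z)^2 * (Cg/w^2) := by gcongr
      simp only [] at *
      linarith
    refine this.trans ?_
    rw [integral_add ((int_gradSq hu).const_mul _) ((int_sq hu).const_mul _), integral_const_mul,
      integral_const_mul]
    nlinarith
  have h7 := hw _ hv
  set X := (∫ z, gInE u (fun x => f x * (f x * u x)) z) with hX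
  set Y := ∫ z, u z * (f z * (f z * u z)) with hY
  have h8 : (X - μ * Y)^2 ≤ (√(4*M+6*Cg+1) * √η / w)^2 := by
    refine h7.trans ?_
    rw [div_pow, mul_pow, Real.sq_sqrt hη, Real.sq_sqrt (by linarith), mul_comm _ η, mul_div_assoc]
    refine mul_le_mul_of_nonneg_left ?_ hη
    rw [le_div_iff₀ (by positivity)]
    have : w^2 ≤ 1 := by nlinarith
    have e : (4*M + 6*(Cg/w^2) + 1) * w^2 = (4*M+1)*w^2+6*Cg := by field_simp; ring
    calc _ ≤ (4*M + 6*(Cg/w^2) + 1) * w^2 := by gcongr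
      _ ≤ _ := by rw [e]; nlinarith
  have h9 := abs_le_of_sq_le_sq h8 (by positivity)
  have h9 := (le_abs_self _).trans h9
  have hU := Us_nonneg u g s
  have h10 : μ * Y ≤ M * Us u g s := (mul_le_mul_of_nonneg_left h4 hμ0).trans (by gcongr)
  have h11 : Us u g (s+w) ≤ Us u g s := Us_anti hu (by linarith)
  have h12 : (2*M+1) * Us u g s ≤ (2*M+1)/w^2 * Us u g s := by
    gcongr
    rw [le_div_iff₀ (by positivity)]
    have : w^2 ≤ 1 := by nlinarith
    nlinarith
  have e : (2*M+4*Cg+1)/w^2 * Us u g s = (2*M+1)/w^2 * Us u g s + 4 * (Cg/w^2 * Us u g s) := by ring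
  rw [e]
  have e2 : 2 * √(4*M+6*Cg+1) * √η / w = 2 * (√(4*M+6*Cg+1) * √η / w) := by ring
  rw [e2]
  linarith

/-- Energy of the truncated function. -/
lemma trunc_energy {Ω : Set (EucN N)} {u g : EucN N → ℝ} (hu : IsTestE Ω u) (hg : GoodE g)
    {Cg : ℝ} (hCg : 1 ≤ Cg) (hCgg : ∀ s w : ℝ, 0 < w → ∀ z, gradSqE (cutE g s w) z ≤ Cg / w^2)
    {s w : ℝ} (hw0 : 0 < w) (hw1 : w ≤ 1) :
    (∫ z, gradSqE (fun x => cutE g s w x * u x) z) + ∫ z, (cutE g s w z * u z)^2 ≤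
      3*Cg/w^2 * (Us u g s + Ds u g s) ∧ Us u g (s+w) ≤ ∫ z, (cutE g s w z * u z)^2 := by
  set f := cutE g s w with hf
  have hfs : ContDiff ℝ (⊤ : ℕ∞) f := cutE_smooth hg s w
  have hf1 : ∀ z, (f z)^2 ≤ 1 := cutE_sq_le_one g s w
  have hfG : ∀ z, gradSqE f z ≤ Cg/w^2 := hCgg s w hw0
  have hG0 : 0 ≤ Cg/w^2 := by positivity
  have hfu : IsTestE Ω (fun x => f x * u x) := hu.mul_left hfs
  have hS := supE_meas hg s
  have hoff : ∀ z, z ∉ supE g s → f z = 0 ∧ gradSqE f z = 0 := by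
    intro z hz
    have : g z ≤ s := (not_le.mp hz).le
    exact ⟨cutE_zero hw0 this, cutE_grad_zero hw0 this⟩
  constructor
  · have h1 : ∫ z, gradSqE (fun x => f x * u x) z ≤ 2 * Ds u g s + 2 * (Cg/w^2) * Us u g s := by
      unfold Us Ds
      rw [← integral_const_mul, ← integral_const_mul, ← integral_add
        ((int_gradSq hu).integrableOn.const_mul _) ((int_sq hu).integrableOn.const_mul _)]
      refine int_le_set hS (((int_gradSq hu).const_mul _).add ((int_sq hu).const_mul _))
        (int_gradSq hfu) (fun z _ => ?_) (fun z hz => ?_)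
      · have b := gradSqE_mul_le' hfs hu.1 z (hf1 z)
        have i1 : (u z)^2 * gradSqE f z ≤ (u z)^2 * (Cg/w^2) := by gcongr; exact hfG z
        linarith
      · have b := gradSqE_mul_le hfs hu.1 z
        rw [(hoff z hz).1, (hoff z hz).2] at b
        simpa using b
    have h2 : ∫ z, (f z * u z)^2 ≤ Us u g s := by
      refine int_le_set hS (int_sq hu) (int_sq hfu) (fun z _ => ?_) (fun z hz => ?_)
      · rw [mul_pow]; nlinarith [sq_nonneg (u z), hf1 z]
      · rw [(hoff z hz).1]; simp
    have hU := Us_nonneg u g s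
    have hD := Ds_nonneg u g s
    have h3 : 1 ≤ Cg/w^2 := by rw [le_div_iff₀ (by positivity)]; nlinarith
    have : 3*Cg/w^2 = 3*(Cg/w^2) := by ring
    rw [this]
    nlinarith
  · refine set_int_le (supE_meas hg _) (int_sq hu) (int_sq hfu)
      (fun z hz => ?_) (fun z => sq_nonneg _)
    rw [show f z = 1 from cutE_one hw0 hz]; simp

lemma trunc_support {Ω : Set (EucN N)} {u g : EucN N → ℝ} (hu : IsTestE Ω u) 
    {s w : ℝ} (hw0 : 0 < w) :
    Function.support (fun x => cutE g s w x * u x) ⊆ Ω ∩ supE g s := by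
  intro x hx
  have hx' : cutE g s w x ≠ 0 ∧ u x ≠ 0 := by simpa using hx
  refine ⟨hu.2.2 (subset_tsupport _ hx'.2), ?_⟩
  by_contra h
  exact hx'.1 (cutE_zero hw0 (not_le.mp h).le)



lemma pdE_sum {n : ℕ} {u : Fin n → EucN N → ℝ} (hu : ∀ j, ContDiff ℝ (⊤ : ℕ∞) (u j))
    (β : Fin n → ℝ) (z : EucN N) (p : Fin N) :
    pdE (fun x => ∑ j, β j * u j x) z p = ∑ j, β j * pdE (u j) z p := by
  unfold pdE
  rw [fderiv_fun_sum (fun j _ => ((smooth_diff (hu j)) z).const_mul (β j))]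
  simp only [sum_apply]
  refine Finset.sum_congr rfl fun j _ => ?_
  rw [fderiv_const_mul ((smooth_diff (hu j)) z)]
  simp

lemma int_comb_sq {Ω : Set (EucN N)} {n : ℕ} {u : Fin n → EucN N → ℝ} (hu : ∀ j, IsTestE Ω (u j))
    (β : Fin n → ℝ) : ∫ z, (∑ j, β j * u j z)^2 = ∑ i, ∑ j, β i * β j * ∫ z, u i z * u j z := by
  have e : ∀ z, (∑ j, β j * u j z)^2 = ∑ i, ∑ j, β i * β j * (u i z * u j z) := by
    intro z; rw [sq, Finset.sum_mul_sum]
    refine Finset.sum_congr rfl fun i _ => Finset.sum_congr rfl fun j _ => by ring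
  simp only [e]
  have hi : ∀ i j, Integrable fun z => β i * β j * (u i z * u j z) := fun i j =>
    (int_mul (hu i) (hu j).1.continuous).const_mul _
  rw [integral_finsetSum _ (fun i _ => integrable_finsetSum _ fun j _ => hi i j)]
  refine Finset.sum_congr rfl fun i _ => ?_
  rw [integral_finsetSum _ (fun j _ => hi i j)]
  exact Finset.sum_congr rfl fun j _ => integral_const_mul _ _

lemma int_comb_grad {Ω : Set (EucN N)} {n : ℕ} {u : Fin n → EucN N → ℝ} (hu : ∀ j, IsTestE Ω (u j))
    (β : Fin n → ℝ) : ∫ z, gradSqE (fun x => ∑ j, β j * u j x) z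
      = ∑ i, ∑ j, β i * β j * ∫ z, gInE (u i) (u j) z := by
  have e : ∀ z, gradSqE (fun x => ∑ j, β j * u j x) z
      = ∑ i, ∑ j, β i * β j * gInE (u i) (u j) z := by
    intro z
    simp only [gradSqE_eq', pdE_sum (fun j => (hu j).1), gInE, Finset.mul_sum]
    have : ∀ p, (∑ j, β j * pdE (u j) z p)^2
        = ∑ i, ∑ j, β i * β j * (pdE (u i) z p * pdE (u j) z p) := by
      intro p; rw [sq, Finset.sum_mul_sum]
      refine Finset.sum_congr rfl fun i _ => Finset.sum_congr rfl fun j _ => by ring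
    simp only [this]
    rw [Finset.sum_comm]
    exact Finset.sum_congr rfl fun i _ => Finset.sum_comm
  simp only [e]
  have hi : ∀ i j, Integrable fun z => β i * β j * (gInE (u i) (u j) z) := fun i j =>
    (int_gIn (hu i) (hu j).1).const_mul _
  rw [integral_finsetSum _ (fun i _ => integrable_finsetSum _ fun j _ => hi i j)]
  refine Finset.sum_congr rfl fun i _ => ?_
  rw [integral_finsetSum _ (fun j _ => hi i j)]
  exact Finset.sum_congr rfl fun j _ => integral_const_mul _ _

lemma comb_sq_le {n : ℕ} (u : Fin n → EucN N → ℝ) (β : Fin n → ℝ) (z : EucN N) :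
    (∑ j, β j * u j z)^2 ≤ (∑ j, (β j)^2) * ∑ j, (u j z)^2 :=
  Finset.sum_mul_sq_le_sq_mul_sq _ _ _

lemma comb_grad_le {n : ℕ} {u : Fin n → EucN N → ℝ} (hu : ∀ j, ContDiff ℝ (⊤ : ℕ∞) (u j))
    (β : Fin n → ℝ) (z : EucN N) :
    gradSqE (fun x => ∑ j, β j * u j x) z ≤ (∑ j, (β j)^2) * ∑ j, gradSqE (u j) z := by
  simp only [gradSqE_eq', pdE_sum hu]
  rw [Finset.sum_comm, Finset.mul_sum]
  exact Finset.sum_le_sum fun p _ => Finset.sum_mul_sq_le_sq_mul_sq _ _ _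

/-- An approximate system of eigenfunctions. -/
structure SysE (Ω : Set (EucN N)) (k : ℕ) (M η : ℝ) (u : Fin k → EucN N → ℝ) (μ : Fin k → ℝ) :
    Prop where
  test : ∀ j, IsTestE Ω (u j)
  on : ∀ i j, ∫ z, u i z * u j z = if i = j then 1 else 0
  gr : ∀ i j, ∫ z, gInE (u i) (u j) z = if i = j then μ i else 0
  mono : Monotone μ
  muM : ∀ i, 0 ≤ μ i ∧ μ i ≤ M
  lam : ∀ i : Fin k, eigenvalE Ω (i.1+1) ≤ μ i ∧ μ i ≤ eigenvalE Ω (i.1+1) + η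
  weak : ∀ v, IsTestE Ω v → ∀ j, ((∫ z, gInE (u j) v z) - μ j * ∫ z, u j z * v z)^2
    ≤ η * ((∫ z, gradSqE v z) + ∫ z, (v z)^2)

/-- Total energy on the superlevel set. -/
def EE {k : ℕ} (u : Fin k → EucN N → ℝ) (g : EucN N → ℝ) (s : ℝ) : ℝ :=
  ∑ j, (Us (u j) g s + Ds (u j) g s)

lemma EE_nonneg {k : ℕ} (u : Fin k → EucN N → ℝ) (g : EucN N → ℝ) (s : ℝ) : 0 ≤ EE u g s :=
  Finset.sum_nonneg fun _ _ => add_nonneg (Us_nonneg _ _ _) (Ds_nonneg _ _ _)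

lemma EE_anti {Ω : Set (EucN N)} {k : ℕ} {u : Fin k → EucN N → ℝ} (hu : ∀ j, IsTestE Ω (u j))
    (g : EucN N → ℝ) {s t : ℝ} (h : s ≤ t) : EE u g t ≤ EE u g s :=
  Finset.sum_le_sum fun j _ => add_le_add (Us_anti (hu j) h) (Ds_anti (hu j) h)

lemma sum_castLE_le {n k : ℕ} (h : n ≤ k) (F : Fin k → ℝ) (hF : ∀ j, 0 ≤ F j) :
    ∑ j : Fin n, F (Fin.castLE h j) ≤ ∑ j, F j := by
  have : ∑ j : Fin n, F (Fin.castLE h j)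
      = ∑ j ∈ Finset.univ.map (Fin.castLEEmb h), F j := by
    rw [Finset.sum_map]; rfl
  rw [this]
  exact Finset.sum_le_sum_of_subset_of_nonneg (Finset.subset_univ _) fun j _ _ => hF j

lemma cut_adm {Ω : Set (EucN N)} {k : ℕ} {M η : ℝ} {u : Fin k → EucN N → ℝ} {μ : Fin k → ℝ}
    (S : SysE Ω k M η u μ) {g : EucN N → ℝ} (hg : GoodE g)
    {Cg : ℝ} (hCg : 1 ≤ Cg) (hCgg : ∀ s w : ℝ, 0 < w → ∀ z, gradSqE (cutE g s w) z ≤ Cg / w^2)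
    {s w : ℝ} (hw0 : 0 < w) (hw1 : w ≤ 1) (hE : EE u g s ≤ 1/2) (i : Fin k) :
    AdmE (Ω ∩ {z | g z < s + w}) (i.1+1) (μ i + (16*Cg+2*M)/w^2 * EE u g s) := by
  set E := EE u g s with hEdef
  have hE0 : 0 ≤ E := EE_nonneg _ _ _
  have hM0 : 0 ≤ M := (S.muM i).1.trans (S.muM i).2
  have hik : i.1 + 1 ≤ k := i.2
  have hw2 : 0 < w/2 := by linarith
  set f := cutE g s (w/2) with hf
  set φ : EucN N → ℝ := fun x => 1 - f x with hφ
  set G := 4 * Cg / w^2 with hG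
  have hw21 : w^2 ≤ 1 := by nlinarith
  have hG1 : 1 ≤ G := by rw [hG, le_div_iff₀ (by positivity)]; nlinarith
  have hfs : ContDiff ℝ (⊤ : ℕ∞) f := cutE_smooth hg s _
  have hφs : ContDiff ℝ (⊤ : ℕ∞) φ := contDiff_const.sub hfs
  have hpd : ∀ z p, pdE φ z p = - pdE f z p := by
    intro z p; unfold pdE; rw [hφ, fderiv_const_sub]; simp
  have hgr : ∀ z, gradSqE φ z = gradSqE f z := by
    intro z; simp [gradSqE_eq', hpd]
  have hfG : ∀ z, gradSqE φ z ≤ G := by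
    intro z; rw [hgr]; refine (hCgg s _ hw2 z).trans (le_of_eq ?_); rw [hG]; field_simp; norm_num
  have hφ1 : ∀ z, (φ z)^2 ≤ 1 := fun z => by
    have a := cutE_nonneg g s (w/2) z; have b := cutE_le_one g s (w/2) z
    have : φ z = 1 - cutE g s (w/2) z := rfl
    rw [this]; nlinarith
  have hoff : ∀ z, z ∉ supE g s → φ z = 1 ∧ ∀ p, pdE φ z p = 0 := by
    intro z hz
    have h : g z ≤ s := (not_le.mp hz).le
    refine ⟨by simp [hφ, hf, cutE_zero hw2 h], fun p => ?_⟩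
    have h0 := cutE_grad_zero hw2 h
    rw [gradSqE_eq', Finset.sum_eq_zero_iff_of_nonneg (fun _ _ => sq_nonneg _)] at h0
    rw [hpd, neg_eq_zero]
    exact pow_eq_zero_iff (two_ne_zero) |>.mp (h0 p (Finset.mem_univ _))
  have hSm := supE_meas hg s
  let u' : Fin (i.1+1) → EucN N → ℝ := fun j => u (Fin.castLE hik j)
  have hu' : ∀ j, IsTestE Ω (u' j) := fun j => S.test _
  have key : ∀ β : Fin (i.1+1) → ℝ,
      (∫ z, gradSqE (fun x => φ x * ∑ j, β j * u' j x) z ≤ (∑ j, (β j)^2) * (μ i + 2 * G * E)) ∧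
      (∑ j, (β j)^2) * (1 - E) ≤ ∫ z, (φ z * ∑ j, β j * u' j z)^2 := by
    intro β
    set B := ∑ j, (β j)^2 with hB
    have hB0 : 0 ≤ B := Finset.sum_nonneg fun _ _ => sq_nonneg _
    set U : EucN N → ℝ := fun x => ∑ j, β j * u' j x with hU
    have hUt : IsTestE Ω U := IsTestE.sum hu' β
    have hφU : IsTestE Ω (fun x => φ x * U x) := hUt.mul_left hφs
    have e1 : ∫ z, (U z)^2 = B := by
      rw [hU, int_comb_sq hu']
      refine Finset.sum_congr rfl fun a _ => ?_
      rw [Finset.sum_eq_single a]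
      · simp only [u']; rw [S.on]; simp; ring
      · intro b _ hb; simp only [u']; rw [S.on, if_neg]; simp
        intro h; exact hb (Fin.castLE_injective hik h).symm
      · simp
    have e2 : ∫ z, gradSqE U z ≤ B * μ i := by
      rw [hU, int_comb_grad hu', hB, Finset.sum_mul]
      refine Finset.sum_le_sum fun a _ => ?_
      rw [Finset.sum_eq_single a]
      · simp only [u']; rw [S.gr]; simp only [if_true, ← sq]
        gcongr
        refine S.mono ?_
        rw [Fin.le_def]; simp; omega
      · intro b _ hb; simp only [u']; rw [S.gr, if_neg]; simp
        intro h; exact hb (Fin.castLE_injective hik h).symm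
      · simp
    have e3 : ∫ z in supE g s, (U z)^2 ≤ B * ∑ j, Us (u j) g s := by
      have : ∫ z in supE g s, (U z)^2 ≤ ∫ z in supE g s, B * ∑ j, (u' j z)^2 := by
        refine integral_mono (int_sq hUt).integrableOn
          ((integrable_finsetSum _ fun j _ => (int_sq (hu' j)).integrableOn).const_mul _)
          fun z => comb_sq_le u' β z
      refine this.trans ?_
      rw [integral_const_mul, integral_finsetSum _ fun j _ => (int_sq (hu' j)).integrableOn]
      gcongr
      exact sum_castLE_le hik (fun j => Us (u j) g s) fun j => Us_nonneg _ _ _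
    have e4 : ∫ z in supE g s, gradSqE U z ≤ B * ∑ j, Ds (u j) g s := by
      have : ∫ z in supE g s, gradSqE U z ≤ ∫ z in supE g s, B * ∑ j, gradSqE (u' j) z := by
        refine integral_mono (int_gradSq hUt).integrableOn
          ((integrable_finsetSum _ fun j _ => (int_gradSq (hu' j)).integrableOn).const_mul _)
          fun z => comb_grad_le (fun j => (hu' j).1) β z
      refine this.trans ?_
      rw [integral_const_mul, integral_finsetSum _ fun j _ => (int_gradSq (hu' j)).integrableOn]
      gcongr
      exact sum_castLE_le hik (fun j => Ds (u j) g s) fun j => Ds_nonneg _ _ _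
    have hEs : E = ∑ j, Us (u j) g s + ∑ j, Ds (u j) g s := by
      rw [hEdef, EE, Finset.sum_add_distrib]
    have hUs0 : 0 ≤ ∑ j, Us (u j) g s := Finset.sum_nonneg fun _ _ => Us_nonneg _ _ _
    have hDs0 : 0 ≤ ∑ j, Ds (u j) g s := Finset.sum_nonneg fun _ _ => Ds_nonneg _ _ _
    constructor
    · have h1 : (∫ z, gradSqE (fun x => φ x * U x) z) - ∫ z, gradSqE U z ≤
          ∫ z in supE g s, (gradSqE U z + 2 * G * (U z)^2) := by
        rw [← integral_sub (int_gradSq hφU) (int_gradSq hUt)]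
        refine int_le_set hSm ((int_gradSq hUt).add ((int_sq hUt).const_mul _))
          ((int_gradSq hφU).sub (int_gradSq hUt)) (fun z _ => ?_) (fun z hz => ?_)
        · have a := gradSqE_mul_le' hφs hUt.1 z (hφ1 z)
          have i1 : (U z)^2 * gradSqE φ z ≤ (U z)^2 * G := by gcongr; exact hfG z
          linarith
        · have : gradSqE (fun x => φ x * U x) z = gradSqE U z := by
            simp only [gradSqE_eq', pdE_mul hφs hUt.1, (hoff z hz).1, (hoff z hz).2]
            simp
          linarith
      rw [integral_add (int_gradSq hUt).integrableOn ((int_sq hUt).integrableOn.const_mul _),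
        integral_const_mul] at h1
      have h2 : 2 * G * ∫ z in supE g s, (U z)^2 ≤ 2 * G * (B * ∑ j, Us (u j) g s) := by gcongr
      have h3 : B * ∑ j, Ds (u j) g s ≤ 2 * G * (B * ∑ j, Ds (u j) g s) := by
        have : 0 ≤ B * ∑ j, Ds (u j) g s := by positivity
        nlinarith
      rw [hEs]
      linarith
    · have h1 : ∫ z, ((U z)^2 - (φ z * U z)^2) ≤ ∫ z in supE g s, (U z)^2 := by
        refine int_le_set hSm (int_sq hUt) ((int_sq hUt).sub (int_sq hφU)) (fun z _ => ?_)
          (fun z hz => by rw [(hoff z hz).1]; simp)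
        have := sq_nonneg (φ z * U z); linarith
      rw [integral_sub (int_sq hUt) (int_sq hφU), e1] at h1
      rw [hEs]
      have : 0 ≤ B * ∑ j, Ds (u j) g s := by positivity
      show _ ≤ ∫ z, (φ z * U z)^2
      linarith
  have efam : ∀ β : Fin (i.1+1) → ℝ, (fun x => ∑ j, β j * (φ x * u' j x))
      = fun x => φ x * ∑ j, β j * u' j x := by
    intro β; ext x; rw [Finset.mul_sum]; exact Finset.sum_congr rfl fun j _ => by ring
  refine ⟨fun j x => φ x * u' j x, fun j => ?_, ?_, fun β => ?_⟩
  · have h := (hu' j).mul_left hφs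
    refine ⟨h.1, h.2.1, fun x hx => ⟨h.2.2 hx, ?_⟩⟩
    have hcl : IsClosed {z | g z ≤ s + w/2} := isClosed_le hg.1.continuous continuous_const
    have : tsupport (fun x => φ x * u' j x) ⊆ {z | g z ≤ s + w/2} := by
      refine closure_minimal (fun y hy => ?_) hcl
      by_contra hny
      have : φ y = 0 := by simp [hφ, hf, cutE_one hw2 (not_le.mp hny).le]
      simp [this] at hy
    have := this hx
    simp only [mem_ofPred_eq] at this ⊢
    linarith
  · rw [Fintype.linearIndependent_iff]
    intro β hβ
    have h0 : (fun x => φ x * ∑ j, β j * u' j x) = 0 := by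
      rw [← efam, ← hβ]; ext x; simp
    have h1 := (key β).2
    have h2 : ∫ z, (φ z * ∑ j, β j * u' j z)^2 = 0 := by
      have : ∀ z, φ z * ∑ j, β j * u' j z = 0 := fun z => congrFun h0 z
      simp [this]
    rw [h2] at h1
    have h3 : ∑ j, (β j)^2 ≤ 0 := by nlinarith
    have h4 := le_antisymm h3 (Finset.sum_nonneg fun _ _ => sq_nonneg _)
    rw [Finset.sum_eq_zero_iff_of_nonneg (fun _ _ => sq_nonneg _)] at h4
    intro j
    exact pow_eq_zero_iff (two_ne_zero) |>.mp (h4 j (Finset.mem_univ _))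
  · have e1 := efam β
    have e2 : ∀ z, ∑ j, β j * (φ z * u' j z) = φ z * ∑ j, β j * u' j z := fun z => congrFun e1 z
    obtain ⟨k1, k2⟩ := key β
    set B := ∑ j, (β j)^2 with hB
    have hB0 : 0 ≤ B := Finset.sum_nonneg fun _ _ => sq_nonneg _
    show ∫ z, gradSqE (fun x => ∑ j, β j * (φ x * u' j x)) z ≤
      _ * ∫ z, (∑ j, β j * (φ z * u' j z))^2
    simp only [e2]
    refine k1.trans ?_
    have hc0 : 0 ≤ μ i + (16*Cg+2*M)/w^2 * E := add_nonneg (S.muM i).1 (by positivity)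
    refine le_trans ?_ (mul_le_mul_of_nonneg_left k2 hc0)
    rw [mul_comm B, mul_comm B, ← mul_assoc]
    refine mul_le_mul_of_nonneg_right ?_ hB0
    have h1 : 4 * G + 2 * M ≤ (16*Cg+2*M)/w^2 := by
      have : 2*M ≤ 2*M/w^2 := by rw [le_div_iff₀ (by positivity)]; nlinarith
      have e : (16*Cg+2*M)/w^2 = 4 * G + 2*M/w^2 := by rw [hG]; ring
      linarith
    set A := (16*Cg+2*M)/w^2
    have hμM := (S.muM i).2
    have a1 : (4*G+2*M)*E ≤ A * E := by gcongr
    have a2 : A * E * (1/2) ≤ A * E * (1 - E) := by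
      have : 0 ≤ A * E := le_trans (by positivity) a1
      gcongr; linarith
    have a3 : μ i * E ≤ M * E := by gcongr
    nlinarith


/-- Volume of the part of `Ω` in the superlevel set. -/
def mE (Ω : Set (EucN N)) (g : EucN N → ℝ) (s : ℝ) : ℝ := (volume (Ω ∩ supE g s)).toReal

lemma mE_ofReal {Ω : Set (EucN N)} (h1 : volume Ω = 1) (g : EucN N → ℝ) (s : ℝ) :
    volume (Ω ∩ supE g s) ≤ ENNReal.ofReal (mE Ω g s) := by
  rw [mE, ENNReal.ofReal_toReal]
  exact ((measure_mono inter_subset_left).trans_lt (by rw [h1]; simp)).ne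

lemma mE_anti {Ω : Set (EucN N)} (h1 : volume Ω = 1) (g : EucN N → ℝ) {s t : ℝ} (h : s ≤ t) :
    mE Ω g t ≤ mE Ω g s := by
  refine ENNReal.toReal_mono ?_ (measure_mono (inter_subset_inter_right _ (supE_anti g h)))
  exact ((measure_mono inter_subset_left).trans_lt (by rw [h1]; simp)).ne

lemma mE_le_one {Ω : Set (EucN N)} (h1 : volume Ω = 1) (g : EucN N → ℝ) (s : ℝ) :
    mE Ω g s ≤ 1 := by
  have := ENNReal.toReal_mono (by rw [h1]; simp) (measure_mono (μ := volume)
    (inter_subset_left (s := Ω) (t := supE g s)))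
  rwa [h1, ENNReal.toReal_one] at this

lemma mE_nonneg (Ω : Set (EucN N)) (g : EucN N → ℝ) (s : ℝ) : 0 ≤ mE Ω g s := ENNReal.toReal_nonneg

section Sys
variable {Ω : Set (EucN N)} {k : ℕ} {M η : ℝ} {u : Fin k → EucN N → ℝ} {μ : Fin k → ℝ}

lemma SysE.sq (S : SysE Ω k M η u μ) (j) : ∫ z, (u j z)^2 = 1 := by
  have := S.on j j; simpa [pow_two] using this

lemma SysE.grad (S : SysE Ω k M η u μ) (j) : ∫ z, gradSqE (u j) z = μ j := by
  have := S.gr j j; simpa [gradSqE_eq] using this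

lemma step_cacc (S : SysE Ω k M η u μ) {g : EucN N → ℝ} (hg : GoodE g) (hη : 0 ≤ η) (hM : 0 ≤ M)
    {Cg : ℝ} (hCg : 1 ≤ Cg) (hCgg : ∀ s w : ℝ, 0 < w → ∀ z, gradSqE (cutE g s w) z ≤ Cg / w^2)
    {s w : ℝ} (hw0 : 0 < w) (hw1 : w ≤ 1) :
    EE u g (s+w) ≤ (2*M+4*Cg+1)/w^2 * (∑ j, Us (u j) g s)
      + k * (2 * √(4*M+6*Cg+1)) * √η / w := by
  have : EE u g (s+w) ≤ ∑ j, ((2*M+4*Cg+1)/w^2 * Us (u j) g s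
      + 2 * √(4*M+6*Cg+1) * √η / w) :=
    Finset.sum_le_sum fun j _ => cacc1 (S.test j) hg hCg hCgg hη hM (S.muM j).1 (S.muM j).2
      (S.sq j).le ((S.grad j).le.trans (S.muM j).2) (fun v hv => S.weak v hv j) hw0 hw1
  refine this.trans (le_of_eq ?_)
  rw [Finset.sum_add_distrib, ← Finset.mul_sum]
  simp; ring

lemma step_poinc (S : SysE Ω k M η u μ) (hΩ : volume Ω = 1) {g : EucN N → ℝ} (hg : GoodE g)
    {Cg : ℝ} (hCg : 1 ≤ Cg) (hCgg : ∀ s w : ℝ, 0 < w → ∀ z, gradSqE (cutE g s w) z ≤ Cg / w^2)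
    {C : ℝ} (hC : 0 < C) (hP : ∀ (v : EucN N → ℝ) (m : ℝ), IsTestE univ v → 0 ≤ m →
      volume (Function.support v) ≤ ENNReal.ofReal m →
      ∫ z, (v z)^2 ≤ C * m^((2:ℝ)/N) * ∫ z, gradSqE v z)
    {s w : ℝ} (hw0 : 0 < w) (hw1 : w ≤ 1) :
    ∑ j, Us (u j) g (s+w) ≤ C * (3*Cg)/w^2 * (mE Ω g s)^((2:ℝ)/N) * EE u g s := by
  rw [EE, Finset.mul_sum]
  refine Finset.sum_le_sum fun j _ => ?_
  obtain ⟨h1, h2⟩ := trunc_energy (S.test j) hg hCg hCgg (s := s) hw0 hw1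
  have ht : IsTestE univ (fun x => cutE g s w x * u j x) :=
    ((S.test j).mul_left (cutE_smooth hg s w)).mono (subset_univ _)
  have h3 := hP _ (mE Ω g s) ht (mE_nonneg _ _ _)
    ((measure_mono (trunc_support (S.test j) hw0)).trans (mE_ofReal hΩ g s))
  have hm : 0 ≤ (mE Ω g s)^((2:ℝ)/N) := Real.rpow_nonneg (mE_nonneg _ _ _) _
  have h4 : 0 ≤ ∫ z, (cutE g s w z * u j z)^2 := integral_nonneg fun _ => sq_nonneg _
  calc _ ≤ _ := h2
    _ ≤ _ := h3
    _ ≤ C * (mE Ω g s)^((2:ℝ)/N) * (3*Cg/w^2 * (Us (u j) g s + Ds (u j) g s)) := by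
        gcongr; linarith
    _ = _ := by ring

lemma step_local (S : SysE Ω k M η u μ) {g : EucN N → ℝ} (hg : GoodE g)
    {Cg : ℝ} (hCg : 1 ≤ Cg) (hCgg : ∀ s w : ℝ, 0 < w → ∀ z, gradSqE (cutE g s w) z ≤ Cg / w^2)
    {C : ℝ} (hC : 0 < C) (hP : ∀ (v : EucN N → ℝ) (m : ℝ), IsTestE univ v → 0 ≤ m →
      (∀ y, volume (Function.support v ∩ Metric.ball y 1) ≤ ENNReal.ofReal m) →
      ∫ z, (v z)^2 ≤ C * m^((2:ℝ)/N) * ((∫ z, gradSqE v z) + ∫ z, (v z)^2))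
    {s m0 : ℝ} (hm0 : 0 ≤ m0)
    (hloc : ∀ y, volume (Ω ∩ supE g s ∩ Metric.ball y 1) ≤ ENNReal.ofReal m0) :
    ∑ j, Us (u j) g (s+1) ≤ C * (3*Cg) * m0^((2:ℝ)/N) * EE u g s := by
  rw [EE, Finset.mul_sum]
  refine Finset.sum_le_sum fun j _ => ?_
  obtain ⟨h1, h2⟩ := trunc_energy (S.test j) hg hCg hCgg (s := s) one_pos le_rfl
  have ht : IsTestE univ (fun x => cutE g s 1 x * u j x) :=
    ((S.test j).mul_left (cutE_smooth hg s 1)).mono (subset_univ _)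
  have h3 := hP _ m0 ht hm0 (fun y => (measure_mono
    (inter_subset_inter_left _ (trunc_support (S.test j) one_pos))).trans (hloc y))
  have hm : 0 ≤ m0^((2:ℝ)/N) := Real.rpow_nonneg hm0 _
  calc _ ≤ _ := h2
    _ ≤ _ := h3
    _ ≤ C * m0^((2:ℝ)/N) * (3*Cg/1^2 * (Us (u j) g s + Ds (u j) g s)) := by
        gcongr
    _ = _ := by ring

lemma EE_le (S : SysE Ω k M η u μ) (g : EucN N → ℝ) (s : ℝ) : EE u g s ≤ k * (1 + M) := by
  have : EE u g s ≤ ∑ _j : Fin k, (1 + M) := by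
    refine Finset.sum_le_sum fun j _ => add_le_add ?_ ?_
    · exact (Us_le (S.test j) s).trans (S.sq j).le
    · exact (Ds_le (S.test j) s).trans ((S.grad j).le.trans (S.muM j).2)
  refine this.trans (le_of_eq ?_)
  simp; ring

end Sys

lemma adm_one_lower {C : ℝ} (hC : 0 < C) (hP : ∀ (v : EucN N → ℝ) (m : ℝ), IsTestE univ v → 0 ≤ m →
      volume (Function.support v) ≤ ENNReal.ofReal m →
      ∫ z, (v z)^2 ≤ C * m^((2:ℝ)/N) * ∫ z, gradSqE v z)
    {Ω : Set (EucN N)} {t c : ℝ} (ht : 0 ≤ t) (hv : volume Ω ≤ ENNReal.ofReal t) {i : ℕ}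
    (h : AdmE Ω (i+1) c) : 1 ≤ C * t^((2:ℝ)/N) * c := by
  obtain ⟨u, hu, hl, hr⟩ := h.pred (show 1 ≤ i+1 by omega)
  have h0 : u 0 ≠ 0 := hl.ne_zero 0
  have hpos := int_sq_pos (hu 0) h0
  have h1 := hr (fun _ => 1)
  simp at h1
  have h2 := hP (u 0) t ((hu 0).mono (subset_univ _)) ht
    ((measure_mono ((subset_tsupport _).trans (hu 0).2.2)).trans hv)
  have ht0 : 0 ≤ t^((2:ℝ)/N) := Real.rpow_nonneg ht _
  have h3 : C * t^((2:ℝ)/N) * ∫ z, gradSqE (u 0) z ≤ C * t^((2:ℝ)/N) * (c * ∫ z, (u 0 z)^2) := by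
    gcongr
  by_contra hlt
  push Not at hlt
  nlinarith

lemma lam_lower {C : ℝ} (hC : 0 < C) (hP : ∀ (v : EucN N → ℝ) (m : ℝ), IsTestE univ v → 0 ≤ m →
      volume (Function.support v) ≤ ENNReal.ofReal m →
      ∫ z, (v z)^2 ≤ C * m^((2:ℝ)/N) * ∫ z, gradSqE v z)
    {Ω : Set (EucN N)} (hv : volume Ω = 1) {i : ℕ} (hne : ∃ c, AdmE Ω (i+1) c) :
    1 / C ≤ eigenvalE Ω (i+1) := by
  rw [eigenvalE_eq]
  refine le_csInf hne fun c hc => ?_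
  have := adm_one_lower hC hP zero_le_one (by rw [hv]; simp) hc
  rw [Real.one_rpow] at this
  rw [div_le_iff₀ hC]; linarith

lemma lam_mono {Ω : Set (EucN N)} {i k : ℕ} (hik : i + 1 ≤ k) (hne : ∃ c, AdmE Ω k c) :
    eigenvalE Ω (i+1) ≤ eigenvalE Ω k := by
  refine le_of_forall_pos_le_add fun ε hε => ?_
  exact eigenvalE_le ((exists_adm_lt hne hε).pred hik)

lemma exists_sys {Ω : Set (EucN N)} {k : ℕ} {K η : ℝ} (hne : ∃ c, AdmE Ω k c)
    (hK : eigenvalE Ω k ≤ K) (hη : 0 < η) (hη1 : η ≤ 1) : ∃ u μ, SysE Ω k (K+1) η u μ := by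
  obtain ⟨u, μ, h1, h2, h3, h4, h5, h6⟩ := approx_eigen hne hη
  refine ⟨u, μ, h1, h2, h3, h4, fun i => ⟨?_, ?_⟩, h5, h6⟩
  · have := h3 i i
    rw [if_pos rfl] at this
    rw [← this]; simp only [← gradSqE_eq]
    exact integral_nonneg fun z => gradSqE_nonneg _ _
  · have := lam_mono (show i.1 + 1 ≤ k from i.2) hne
    linarith [(h5 i).2]



set_option maxHeartbeats 4000000 in
/-- Main iteration: for Ω with locally small volume in `{g ≥ 4}`, cutting Ω somewhere in
`{6 ≤ g ≤ 12}` is spectrally convenient. -/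
theorem cut_exists (hN : 2 ≤ N) (k : ℕ) (K : ℝ) (hK : 0 < K) : ∃ m0 : ℝ, 0 < m0 ∧
    ∀ (Ω : Set (EucN N)) (g : EucN N → ℝ), IsOpen Ω → volume Ω = 1 → (∃ c, AdmE Ω k c) →
      eigenvalE Ω k ≤ K → GoodE g →
      (∀ y, volume (Ω ∩ supE g 4 ∩ Metric.ball y 1) ≤ ENNReal.ofReal m0) →
      ∃ Ω' : Set (EucN N), IsOpen Ω' ∧ Ω' ⊆ Ω ∧ (∀ z ∈ Ω', g z ≤ 12) ∧
        ∀ i : Fin k, ∀ ε > 0, ∃ c, AdmE Ω' (i.1+1) c ∧ c ≤ 2 * K + ε ∧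
          c * ((volume Ω').toReal)^((2:ℝ)/N) ≤ eigenvalE Ω (i.1+1) + ε := by
  obtain ⟨CP, hCP, hP⟩ := poincare_small hN
  obtain ⟨CL, hCL, hL⟩ := poincare_local hN
  obtain ⟨Cg, hCg, hCgg'⟩ := cutE_grad N
  set M := K + 1 with hM
  have hM0 : 0 < M := by linarith
  set α : ℝ := (2:ℝ)/N with hα
  have hN0 : (0:ℝ) < N := by exact_mod_cast (show 0 < N by omega)
  have hα0 : 0 < α := by positivity
  have hα1 : α ≤ 1 := by rw [hα, div_le_one hN0]; exact_mod_cast hN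
  set c0 := 1 / CP with hc0
  have hc00 : 0 < c0 := by positivity
  set C1 := 16*Cg+2*M with hC1
  set C1' := 2 * C1 / (α * c0) with hC1'
  have hC10 : 0 < C1 := by rw [hC1]; linarith
  have hC1'0 : 0 < C1' := by positivity
  set C2 := 2*M+4*Cg+1 with hC2
  have hC20 : 0 < C2 := by rw [hC2]; linarith
  set C3 := CP * (3*Cg) with hC3
  have hC30 : 0 < C3 := by positivity
  set C4 := C2 * C3 * C1'^α with hC4
  have hC40 : 0 < C4 := by positivity
  set B : ℝ := k * (2 * √(4*M+6*Cg+1)) with hB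
  have hB0 : 0 ≤ B := by positivity
  set θ : ℝ := (1/8:ℝ)^N with hθ
  have hθ0 : 0 < θ := by positivity
  have hθα : θ^α = 1/64 := by
    rw [hθ, hα, ← Real.rpow_natCast, ← Real.rpow_mul (by norm_num), mul_div_cancel₀ _ hN0.ne']
    norm_num
  have hθ1 : θ ≤ 1/64 := by
    rw [hθ]
    calc (1/8:ℝ)^N ≤ (1/8:ℝ)^2 := pow_le_pow_of_le_one (by norm_num) (by norm_num) hN
      _ = 1/64 := by norm_num
  -- choice of δ
  obtain ⟨δ, hδ0, hδ1, hδ⟩ : ∃ δ : ℝ, 0 < δ ∧ δ ≤ 1/2 ∧ C4 * δ^α ≤ θ/2 := by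
    refine ⟨min (1/2) ((θ/2/C4)^(1/α)), by positivity, min_le_left _ _, ?_⟩
    have : (min (1/2) ((θ/2/C4)^(1/α)))^α ≤ ((θ/2/C4)^(1/α))^α := by
      gcongr; exact min_le_right _ _
    rw [← Real.rpow_mul (by positivity), one_div_mul_cancel hα0.ne', Real.rpow_one] at this
    calc _ ≤ C4 * (θ/2/C4) := by gcongr
      _ = θ/2 := by field_simp
  -- choice of m0
  set C5 := C2 * (CL * (3*Cg)) * (k * (1+M)) + 1 with hC5
  have hC50 : 0 < C5 := by positivity
  obtain ⟨m0, hm0, hm0'⟩ : ∃ m0 : ℝ, 0 < m0 ∧ C5 * m0^α ≤ δ/2 := by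
    refine ⟨(δ/2/C5)^(1/α), by positivity, ?_⟩
    rw [← Real.rpow_mul (by positivity), one_div_mul_cancel hα0.ne', Real.rpow_one]
    exact le_of_eq (by field_simp)
  refine ⟨m0, hm0, fun Ω g hΩ hvol hne hlam hg hloc => ?_⟩
  have hCgg := hCgg' g hg
  have hlow : ∀ i : Fin k, c0 ≤ eigenvalE Ω (i.1+1) := fun i =>
    lam_lower hCP hP hvol ⟨_, (hne.choose_spec).pred i.2⟩
  have hup : ∀ i : Fin k, eigenvalE Ω (i.1+1) ≤ K := fun i => (lam_mono i.2 hne).trans hlam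
  by_cases hm : mE Ω g 12 = 0
  · refine ⟨Ω, hΩ, subset_rfl, fun z hz => ?_, fun i ε hε => ⟨eigenvalE Ω (i.1+1) + ε, ?_, ?_, ?_⟩⟩
    · by_contra hlt
      push Not at hlt
      have ho : IsOpen (Ω ∩ {z | 12 < g z}) := hΩ.inter (isOpen_lt continuous_const hg.1.continuous)
      have hp := ho.measure_pos volume ⟨z, hz, hlt⟩
      have : volume (Ω ∩ {z | 12 < g z}) ≤ volume (Ω ∩ supE g 12) :=
        measure_mono fun y hy => ⟨hy.1, (le_of_lt hy.2 : (12:ℝ) ≤ g y)⟩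
      have h2 := this.trans (mE_ofReal hvol g 12)
      rw [hm] at h2; simp at h2
      rw [h2] at hp; exact lt_irrefl _ hp
    · exact exists_adm_lt ⟨_, (hne.choose_spec).pred i.2⟩ hε
    · linarith [hup i]
    · rw [hvol]; simp
  · have hms : 0 < mE Ω g 12 := lt_of_le_of_ne (mE_nonneg _ _ _) (Ne.symm hm)
    set ms := mE Ω g 12 with hmsd
    obtain ⟨n, hn⟩ : ∃ n : ℕ, C1' * δ * (4*θ)^n < ms := by
      have h4 : 4 * θ < 1 := by linarith
      obtain ⟨n, hn⟩ := exists_pow_lt_of_lt_one (show 0 < ms/(C1'*δ) by positivity) h4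
      refine ⟨n, ?_⟩
      rw [lt_div_iff₀ (by positivity)] at hn
      linarith
    -- choice of η
    obtain ⟨η, hη0, hη1, hη2, hη3⟩ : ∃ η : ℝ, 0 < η ∧ η ≤ 1 ∧ η ≤ α * c0 * ms / 2 ∧
        B * 2^n * √η ≤ δ * θ^(n+1) / 2 := by
      set q := δ * θ^(n+1) / 2 / (B * 2^n + 1) with hq
      have hq0 : 0 < q := by positivity
      refine ⟨min 1 (min (α * c0 * ms / 2) (q^2)), by positivity, min_le_left _ _,
        (min_le_right _ _).trans (min_le_left _ _), ?_⟩
      have : √(min 1 (min (α * c0 * ms / 2) (q^2))) ≤ q := by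
        refine Real.sqrt_le_iff.mpr ⟨hq0.le, (min_le_right _ _).trans (min_le_right _ _)⟩
      calc _ ≤ B * 2^n * q := by gcongr
        _ ≤ (B * 2^n + 1) * q := by gcongr; linarith
        _ = _ := by rw [hq]; field_simp
    obtain ⟨u, μ, S⟩ := exists_sys hne hlam hη0 hη1
    rw [← hM] at S
    let w : ℕ → ℝ := fun j => (1/2)^j
    let s : ℕ → ℝ := fun j => 12 - 6 * (1/2)^j
    have hw0 : ∀ j, 0 < w j := fun j => by positivity
    have hw1 : ∀ j, w j ≤ 1 := fun j => pow_le_one₀ (by norm_num) (by norm_num)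
    have hsw : ∀ j, s (j+1) = s j + w j + w j + w j := fun j => by
      simp only [s, w, pow_succ]; ring
    have hs12 : ∀ j, s j ≤ 12 := fun j => by
      have : (0:ℝ) < (1/2)^j := by positivity
      simp only [s]; linarith
    have hsw12 : ∀ j, s j + w j ≤ 12 := fun j => by
      have := hs12 (j+1); rw [hsw] at this; linarith [hw0 j]
    have hE0 : EE u g (s 0) ≤ δ := by
      have e : s 0 = 4 + 1 + 1 := by simp [s]; norm_num
      have h1 := step_cacc S hg hη0.le hM0.le hCg hCgg (s := 4+1) one_pos le_rfl
      have h2 := step_local S hg hCg hCgg hCL hL hm0.le hloc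
      rw [e]
      have h3 := EE_le S g 4
      have h4 : ∑ j, Us (u j) g (4+1) ≤ CL * (3*Cg) * m0^α * (k * (1+M)) := by
        refine h2.trans ?_
        gcongr
      have h5 : C2 * ∑ j, Us (u j) g (4+1) ≤ C5 * m0^α := by
        calc _ ≤ C2 * (CL * (3*Cg) * m0^α * (k * (1+M))) := by gcongr
          _ ≤ (C2 * (CL * (3*Cg)) * (k * (1+M)) + 1) * m0^α := by
            have : 0 ≤ m0^α := by positivity
            linarith
          _ = _ := rfl
      have h6 : B * √η ≤ δ/2 := by
        have : B * √η ≤ B * 2^n * √η := by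
          have : (1:ℝ) ≤ 2^n := one_le_pow₀ (by norm_num)
          have : B * 1 ≤ B * 2^n := by gcongr
          rw [mul_one] at this
          gcongr
        have h7 : θ^(n+1) ≤ 1 := pow_le_one₀ hθ0.le (by linarith)
        have : δ * θ^(n+1) ≤ δ := mul_le_of_le_one_right hδ0.le h7
        linarith
      rw [one_pow, div_one, div_one] at h1
      linarith
    -- dichotomy
    by_cases hwin : ∃ j ≤ n, EE u g (s j) ≤ δ ∧
        η + C1/(w j)^2 * EE u g (s j) ≤ α * c0 * mE Ω g (s j + w j)
    · obtain ⟨j, hj, hEj, hwj⟩ := hwin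
      set m := mE Ω g (s j + w j) with hmd
      have hm1 : m ≤ 1 := mE_le_one hvol _ _
      have hm00 : 0 ≤ m := mE_nonneg _ _ _
      have hVol : (volume (Ω ∩ {z | g z < s j + w j})).toReal = 1 - m := by
        have e : Ω ∩ {z | g z < s j + w j} = Ω \ supE g (s j + w j) := by
          ext z; simp [supE]
        have := measure_sdiff_add_inter (μ := volume) Ω (supE_meas hg (s j + w j))
        rw [hvol] at this
        have h2 := congrArg ENNReal.toReal this
        rw [ENNReal.toReal_add, ENNReal.toReal_one] at h2
        · rw [e, hmd, mE]; linarith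
        · exact ((measure_mono sdiff_subset).trans_lt (by rw [hvol]; simp)).ne
        · exact ((measure_mono inter_subset_left).trans_lt (by rw [hvol]; simp)).ne
      refine ⟨Ω ∩ {z | g z < s j + w j}, hΩ.inter (isOpen_lt hg.1.continuous continuous_const),
        inter_subset_left, fun z hz => hz.2.le.trans (hsw12 j), fun i ε hε => ?_⟩
      refine ⟨_, cut_adm S hg hCg hCgg (hw0 j) (hw1 j) (hEj.trans hδ1) i, ?_, ?_⟩
      · have h1 := (S.lam i).2
        have h2 := hup i
        have h3 := hlow i
        have h4 : α * c0 * m ≤ 1 * c0 * 1 := by gcongr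
        linarith
      · rw [hVol]
        have hb : (1 - m)^α ≤ 1 - α * m := by
          have := rpow_one_add_le_one_add_mul_self (s := -m) (by linarith) hα0.le hα1
          rw [← sub_eq_add_neg] at this
          linarith
        have h1 := (S.lam i).2
        have h3 := hlow i
        have hb0 : 0 ≤ 1 - α * m := by nlinarith
        set lam := eigenvalE Ω (i.1+1) with hlamd
        calc (μ i + C1/(w j)^2 * EE u g (s j)) * (1-m)^α ≤ (lam + α * c0 * m) * (1 - α * m) := by
              refine mul_le_mul (by linarith) hb (Real.rpow_nonneg (by linarith) _)
                (add_nonneg (hc00.le.trans h3) (by positivity))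
          _ ≤ lam + ε := by
              have : α * m * c0 ≤ α * m * lam := by gcongr
              have : 0 ≤ α * m * (α * m * c0) := by positivity
              nlinarith
    · exfalso
      push Not at hwin
      have hmle : ∀ j ≤ n, EE u g (s j) ≤ δ → mE Ω g (s j + w j) ≤ C1' / (w j)^2 * EE u g (s j) := by
        intro j hj hEj
        have h1 := hwin j hj hEj
        have h2 : ms ≤ mE Ω g (s j + w j) := mE_anti hvol g (hsw12 j)
        set m := mE Ω g (s j + w j) with hmd
        have h3 : α * c0 * ms ≤ α * c0 * m := by gcongr
        have h4 : α * c0 * m ≤ 2 * (C1/(w j)^2 * EE u g (s j)) := by linarith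
        have e : C1' / (w j)^2 * EE u g (s j) = 2 * (C1/(w j)^2 * EE u g (s j)) / (α * c0) := by
          rw [hC1']; field_simp
        rw [e, le_div_iff₀ (by positivity)]
        linarith
      have hind : ∀ j, j ≤ n → EE u g (s j) ≤ δ * θ^j := by
        intro j
        induction j with
        | zero => intro _; simpa using hE0
        | succ j ih =>
          intro hj
          have ihj := ih (by omega)
          set E := EE u g (s j) with hE
          have hE00 : 0 ≤ E := EE_nonneg _ _ _
          have hEd : E ≤ δ := ihj.trans (by
            have : θ^j ≤ 1 := pow_le_one₀ hθ0.le (by linarith)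
            exact mul_le_of_le_one_right hδ0.le this)
          have h1 := hmle j (by omega) hEd
          have h2 := step_poinc S hvol hg hCg hCgg hCP hP (s := s j + w j) (hw0 j) (hw1 j)
          have h3 := step_cacc S hg hη0.le hM0.le hCg hCgg (s := s j + w j + w j) (hw0 j) (hw1 j)
          rw [hsw]
          have hEa : EE u g (s j + w j) ≤ E := EE_anti S.test g (by linarith [hw0 j])
          set W := 1/(w j)^2 with hW
          have hWe : W = 4^j := by
            rw [hW]; simp only [w]; rw [← pow_mul, mul_comm, pow_mul, one_div, ← inv_pow]; norm_num
          have hW1 : 1 ≤ W := by rw [hWe]; exact one_le_pow₀ (by norm_num)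
          have hW0 : 0 < W := by linarith
          have h4 : (mE Ω g (s j + w j))^α ≤ C1'^α * W * E^α := by
            calc (mE Ω g (s j + w j))^α ≤ (C1' * W * E)^α := by
                  refine Real.rpow_le_rpow (mE_nonneg _ _ _) (h1.trans (le_of_eq ?_)) hα0.le
                  rw [hW]; ring
              _ = C1'^α * W^α * E^α := by
                  rw [Real.mul_rpow (by positivity) hE00, Real.mul_rpow (by positivity) (by positivity)]
              _ ≤ C1'^α * W * E^α := by
                  gcongr
                  calc W^α ≤ W^(1:ℝ) := Real.rpow_le_rpow_of_exponent_le hW1 hα1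
                    _ = W := Real.rpow_one W
          have hEα0 : 0 ≤ E^α := by positivity
          have h5 : ∑ j', Us (u j') g (s j + w j + w j) ≤ C3 * W * (C1'^α * W * E^α) * E := by
            refine h2.trans ?_
            have e : C3 / (w j)^2 = C3 * W := by rw [hW]; ring
            rw [e]
            have := EE_nonneg u g (s j + w j)
            gcongr
          have h6 : C2 / (w j)^2 * ∑ j', Us (u j') g (s j + w j + w j)
              ≤ C4 * W^3 * E^α * E := by
            have e : C2 / (w j)^2 = C2 * W := by rw [hW]; ring
            rw [e]
            calc _ ≤ C2 * W * (C3 * W * (C1'^α * W * E^α) * E) := by gcongr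
              _ = _ := by rw [hC4]; ring
          have h7 : E^α ≤ δ^α * (1/64)^j := by
            calc E^α ≤ (δ * θ^j)^α := by gcongr
              _ = δ^α * (θ^α)^j := by
                rw [Real.mul_rpow hδ0.le (by positivity), ← Real.rpow_natCast, ← Real.rpow_mul hθ0.le,
                  mul_comm (j:ℝ), Real.rpow_mul hθ0.le, Real.rpow_natCast]
              _ = _ := by rw [hθα]
          have h8 : C4 * W^3 * E^α * E ≤ δ * θ^(j+1) / 2 := by
            have e : W^3 * (1/64)^j = 1 := by
              rw [hWe, ← pow_mul, mul_comm j, pow_mul, ← mul_pow]; norm_num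
            calc C4 * W^3 * E^α * E ≤ C4 * W^3 * (δ^α * (1/64)^j) * (δ * θ^j) := by gcongr
              _ = (C4 * δ^α) * (W^3 * (1/64)^j) * (δ * θ^j) := by ring
              _ ≤ (θ/2) * 1 * (δ * θ^j) := by rw [e]; gcongr
              _ = _ := by ring
          have h9 : B * √η / w j ≤ δ * θ^(j+1) / 2 := by
            have e : B * √η / w j = B * 2^j * √η := by
              simp only [w]; rw [one_div, inv_pow]; field_simp
            rw [e]
            have a : (2:ℝ)^j ≤ 2^n := pow_le_pow_right₀ (by norm_num) (by omega)
            have b : θ^(n+1) ≤ θ^(j+1) := pow_le_pow_of_le_one hθ0.le (by linarith) (by omega)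
            calc B * 2^j * √η ≤ B * 2^n * √η := by gcongr
              _ ≤ _ := hη3
              _ ≤ _ := by gcongr
          linarith
      have hEn := hind n le_rfl
      have h1 := hmle n le_rfl (hEn.trans (by
            have : θ^n ≤ 1 := pow_le_one₀ hθ0.le (by linarith)
            exact mul_le_of_le_one_right hδ0.le this))
      have h2 : ms ≤ mE Ω g (s n + w n) := mE_anti hvol g (hsw12 n)
      have e : C1' / (w n)^2 = C1' * 4^n := by
        simp only [w]; rw [← pow_mul, mul_comm n, pow_mul, one_div, inv_pow, inv_pow]; norm_num
      rw [e] at h1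
      have h3 : C1' * 4^n * EE u g (s n) ≤ C1' * 4^n * (δ * θ^n) := by gcongr
      have h4 : C1' * 4^n * (δ * θ^n) = C1' * δ * (4*θ)^n := by rw [mul_pow]; ring
      linarith



lemma heavy_points (N : ℕ) {m0 : ℝ} (hm0 : 0 < m0) : ∃ M : ℕ, 1 ≤ M ∧ ∀ Ω : Set (EucN N), IsOpen Ω →
    volume Ω = 1 → ∃ y : Fin M → EucN N, ∀ z, ENNReal.ofReal m0 < volume (Ω ∩ Metric.ball z 1) →
      ∃ j, dist z (y j) < 2 := by
  obtain ⟨M, hM⟩ := exists_nat_gt (1/m0)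
  refine ⟨M+1, by omega, fun Ω hΩ hv => ?_⟩
  let P : ℕ → Prop := fun n => ∃ T : Finset (EucN N), T.card = n ∧
    (∀ t ∈ T, ENNReal.ofReal m0 < volume (Ω ∩ Metric.ball t 1)) ∧
    (∀ t ∈ T, ∀ t' ∈ T, t ≠ t' → 2 ≤ dist t t')
  have hbd : ∀ n, P n → n ≤ M := by
    rintro n ⟨T, hT, h1, h2⟩
    have hdis : (T : Set (EucN N)).PairwiseDisjoint (fun t => Ω ∩ Metric.ball t 1) := by
      intro a ha b hb hab
      have := h2 a ha b hb hab
      exact (Metric.ball_disjoint_ball (by linarith)).mono inter_subset_right inter_subset_right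
    have h3 := measure_biUnion_finset (μ := volume) hdis
      (fun t _ => (hΩ.inter Metric.isOpen_ball).measurableSet)
    have h4 : volume (⋃ t ∈ T, Ω ∩ Metric.ball t 1) ≤ 1 := by
      rw [← hv]; exact measure_mono (iUnion₂_subset fun t _ => inter_subset_left)
    have h5 : ∑ t ∈ T, ENNReal.ofReal m0 ≤ 1 :=
      (Finset.sum_le_sum fun t ht => (h1 t ht).le).trans (h3 ▸ h4)
    rw [Finset.sum_const, hT, nsmul_eq_mul, ← ENNReal.ofReal_natCast, ← ENNReal.ofReal_mul (by positivity),
      ENNReal.ofReal_le_one] at h5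
    have h6 : (n:ℝ) ≤ 1/m0 := by rwa [le_div_iff₀ hm0]
    exact_mod_cast (h6.trans hM.le)
  have hmax : ∃ n, P n ∧ ¬ P (n+1) := by
    by_contra hcon
    push Not at hcon
    have : ∀ n, P n := fun n => by
      induction n with
      | zero => exact ⟨∅, by simp⟩
      | succ n ih => exact hcon n ih
    have := hbd (M+1) (this _)
    omega
  obtain ⟨n, ⟨T, hT, h1, h2⟩, hn⟩ := hmax
  have hnM : T.card ≤ M := hT ▸ hbd n ⟨T, hT, h1, h2⟩
  refine ⟨fun j => if h : j.1 < T.card then (T.equivFin.symm ⟨j.1, h⟩ : EucN N) else 0,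
    fun z hz => ?_⟩
  by_contra hcon
  push Not at hcon
  have hfar : ∀ t ∈ T, 2 ≤ dist z t := by
    intro t ht
    have hlt := (T.equivFin ⟨t, ht⟩).2
    have := hcon ⟨(T.equivFin ⟨t, ht⟩).1, by omega⟩
    simpa using this
  have hzT : z ∉ T := fun h => by have := hfar z h; simp at this; linarith
  refine hn ⟨insert z T, by rw [Finset.card_insert_of_notMem hzT, hT], ?_, ?_⟩
  · intro t ht
    rcases Finset.mem_insert.mp ht with rfl | ht
    · exact hz
    · exact h1 t ht
  · intro t ht t' ht' hne
    rcases Finset.mem_insert.mp ht with e | q <;> rcases Finset.mem_insert.mp ht' with e' | q'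
    · exact absurd (e.trans e'.symm) hne
    · rw [e]; exact hfar _ q'
    · rw [e', dist_comm]; exact hfar _ q
    · exact h2 t q t' q' hne

/-- Smoothed distance. -/
def smD (y x : EucN N) : ℝ := √(1 + ‖x - y‖^2)

lemma smD_smooth (y : EucN N) : ContDiff ℝ (⊤ : ℕ∞) (smD y) := by
  unfold smD
  refine ContDiff.sqrt ?_ (fun x => by positivity)
  exact contDiff_const.add ((contDiff_id.sub contDiff_const).norm_sq ℝ)

lemma smD_le (y x : EucN N) : smD y x ≤ 1 + ‖x - y‖ := by
  unfold smD; rw [Real.sqrt_le_iff]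
  have := norm_nonneg (x - y)
  constructor
  · linarith
  · nlinarith

lemma le_smD (y x : EucN N) : ‖x - y‖ ≤ smD y x := by
  unfold smD; apply Real.le_sqrt_of_sq_le; linarith

lemma smD_lip (y x x' : EucN N) : smD y x ≤ smD y x' + ‖x - x'‖ := by
  have h1 : ‖x - y‖ ≤ ‖x' - y‖ + ‖x - x'‖ := by
    have : x - y = (x' - y) + (x - x') := by abel
    rw [this]; exact norm_add_le _ _
  have h2 := le_smD y x'
  have h3 : 0 ≤ smD y x' := Real.sqrt_nonneg _
  have h4 : (smD y x')^2 = 1 + ‖x' - y‖^2 := Real.sq_sqrt (by positivity)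
  have h5 := norm_nonneg (x - x')
  have h6 := norm_nonneg (x - y)
  conv_lhs => unfold smD
  rw [Real.sqrt_le_iff]
  refine ⟨by linarith, ?_⟩
  have h7 : ‖x' - y‖ * ‖x - x'‖ ≤ smD y x' * ‖x - x'‖ := by gcongr
  have h8 : ‖x - y‖^2 ≤ (‖x' - y‖ + ‖x - x'‖)^2 := by gcongr
  nlinarith

/-- Soft minimum of the smoothed distances. -/
def softE {M : ℕ} (y : Fin M → EucN N) (x : EucN N) : ℝ :=
  - Real.log (∑ j, Real.exp (- smD (y j) x))

lemma soft_pos {M : ℕ} (hM : 1 ≤ M) (y : Fin M → EucN N) (x : EucN N) :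
    0 < ∑ j, Real.exp (- smD (y j) x) :=
  Finset.sum_pos (fun _ _ => Real.exp_pos _) ⟨⟨0, hM⟩, Finset.mem_univ _⟩

lemma softE_lip {M : ℕ} (hM : 1 ≤ M) (y : Fin M → EucN N) (x x' : EucN N) :
    softE y x ≤ softE y x' + ‖x - x'‖ := by
  have h1 : Real.exp (-‖x - x'‖) * ∑ j, Real.exp (- smD (y j) x') ≤ ∑ j, Real.exp (- smD (y j) x) := by
    rw [Finset.mul_sum]
    refine Finset.sum_le_sum fun j _ => ?_
    rw [← Real.exp_add]
    apply Real.exp_le_exp.mpr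
    linarith [smD_lip (y j) x x']
  have h2 := Real.log_le_log (mul_pos (Real.exp_pos _) (soft_pos hM y x')) h1
  rw [Real.log_mul (Real.exp_pos _).ne' (soft_pos hM y x').ne', Real.log_exp] at h2
  unfold softE
  linarith

lemma softE_good {M : ℕ} (hM : 1 ≤ M) (y : Fin M → EucN N) : GoodE (softE y) := by
  refine ⟨?_, fun z => ?_⟩
  · unfold softE
    refine (ContDiff.log ?_ (fun x => (soft_pos hM y x).ne')).neg
    exact ContDiff.sum fun j _ => ((smD_smooth (y j)).neg).exp
  · have hl : LipschitzWith 1 (softE y) := by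
      refine LipschitzWith.of_dist_le_mul fun x x' => ?_
      rw [Real.dist_eq, dist_eq_norm, abs_le]
      have h1 := softE_lip hM y x x'
      have h2 := softE_lip hM y x' x
      rw [norm_sub_rev] at h2
      simp
      constructor <;> linarith
    have h1 := norm_fderiv_le_of_lipschitz ℝ hl (x₀ := z)
    rw [gradSqE_eq']
    calc ∑ p, (pdE (softE y) z p)^2 ≤ ∑ _p : Fin N, (1:ℝ) := by
          refine Finset.sum_le_sum fun p _ => ?_
          have h2 := (fderiv ℝ (softE y) z).le_opNorm (EuclideanSpace.single p (1:ℝ))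
          have h3 : ‖EuclideanSpace.single p (1:ℝ)‖ = 1 := by simp
          rw [h3, mul_one] at h2
          have h4 : |pdE (softE y) z p| ≤ 1 := h2.trans (by simpa using h1)
          rw [← sq_abs]
          exact pow_le_one₀ (abs_nonneg _) h4
      _ = N := by simp

lemma softE_le {M : ℕ} (hM : 1 ≤ M) (y : Fin M → EucN N) (x : EucN N) (j : Fin M) :
    softE y x ≤ 1 + ‖x - y j‖ := by
  have h1 : Real.exp (- smD (y j) x) ≤ ∑ j, Real.exp (- smD (y j) x) :=
    Finset.single_le_sum (f := fun j => Real.exp (- smD (y j) x)) (fun _ _ => (Real.exp_pos _).le)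
      (Finset.mem_univ j)
  have h2 := Real.log_le_log (Real.exp_pos _) h1
  rw [Real.log_exp] at h2
  have := smD_le (y j) x
  unfold softE; linarith

lemma exists_near_of_softE {M : ℕ} (hM : 1 ≤ M) (y : Fin M → EucN N) (x : EucN N) {r : ℝ}
    (h : softE y x ≤ r) : ∃ j, ‖x - y j‖ ≤ r + Real.log M := by
  by_contra hcon
  push Not at hcon
  have hM0 : (0:ℝ) < M := by exact_mod_cast hM
  have h1 : ∑ j, Real.exp (- smD (y j) x) < ∑ _j : Fin M, Real.exp (-(r + Real.log M)) := by
    refine Finset.sum_lt_sum_of_nonempty ⟨⟨0, hM⟩, Finset.mem_univ _⟩ fun j _ => ?_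
    apply Real.exp_lt_exp.mpr
    linarith [hcon j, le_smD (y j) x]
  have h2 : ∑ _j : Fin M, Real.exp (-(r + Real.log M)) = Real.exp (-r) := by
    rw [Finset.sum_const, neg_add, Real.exp_add, Real.exp_neg (Real.log M), Real.exp_log hM0]
    simp; field_simp
  rw [h2] at h1
  have h3 := Real.log_lt_log (soft_pos hM y x) h1
  rw [Real.log_exp] at h3
  unfold softE at h; linarith

/-- Reduction to a set contained in finitely many balls. -/
theorem cover_reduction (hN : 2 ≤ N) (k : ℕ) (K : ℝ) (hK : 0 < K) : ∃ (M : ℕ) (ρ : ℝ), 0 < ρ ∧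
    ∀ (Ω : Set (EucN N)), IsOpen Ω → volume Ω = 1 → (∃ c, AdmE Ω k c) →
      eigenvalE Ω k ≤ K →
      ∃ (Ω' : Set (EucN N)) (y : Fin M → EucN N), IsOpen Ω' ∧ Ω' ⊆ Ω ∧
        (Ω' ⊆ ⋃ j, Metric.ball (y j) ρ) ∧
        ∀ i : Fin k, ∀ ε > 0, ∃ c, AdmE Ω' (i.1+1) c ∧ c ≤ 2 * K + ε ∧
          c * ((volume Ω').toReal)^((2:ℝ)/N) ≤ eigenvalE Ω (i.1+1) + ε := by
  obtain ⟨m0, hm0, hcut⟩ := cut_exists hN k K hK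
  obtain ⟨M, hM, hheavy⟩ := heavy_points N hm0
  have hlog : 0 ≤ Real.log M := Real.log_nonneg (by exact_mod_cast hM)
  refine ⟨M, 13 + Real.log M, by linarith, fun Ω hΩ hv hne hlam => ?_⟩
  obtain ⟨y, hy⟩ := hheavy Ω hΩ hv
  obtain ⟨Ω', h1, h2, h3, h4⟩ := hcut Ω (softE y) hΩ hv hne hlam (softE_good hM y) (fun z => by
    by_cases hz : ENNReal.ofReal m0 < volume (Ω ∩ Metric.ball z 1)
    · obtain ⟨j, hj⟩ := hy z hz
      have : Ω ∩ supE (softE y) 4 ∩ Metric.ball z 1 = ∅ := by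
        rw [Set.eq_empty_iff_forall_notMem]
        rintro x ⟨⟨_, hx⟩, hxz⟩
        have hx' : 4 ≤ softE y x := hx
        have a := softE_le hM y x j
        have b : dist x z < 1 := hxz
        have c := dist_triangle x z (y j)
        rw [dist_eq_norm x (y j)] at c
        linarith
      rw [this]; simp
    · refine (measure_mono ?_).trans (not_lt.mp hz)
      exact inter_subset_inter_left _ inter_subset_left)
  refine ⟨Ω', y, h1, h2, fun x hx => ?_, h4⟩
  obtain ⟨j, hj⟩ := exists_near_of_softE hM y x (h3 x hx)
  rw [mem_iUnion]
  refine ⟨j, ?_⟩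
  rw [Metric.mem_ball, dist_eq_norm]; linarith



lemma adm_transfer {U U' : Set (EucN N)} {a b c : ℝ} {i : ℕ} (ha : 0 < a) (hb : 0 ≤ b)
    (T : (EucN N → ℝ) →ₗ[ℝ] (EucN N → ℝ))
    (hT : ∀ u, IsTestE U u → IsTestE U' (T u) ∧ (∫ z, (T u z)^2 = a * ∫ z, (u z)^2) ∧
      (∫ z, gradSqE (T u) z = b * ∫ z, gradSqE u z))
    (h : AdmE U i c) : AdmE U' i (b / a * c) := by
  obtain ⟨u, hu, hli, hc⟩ := h
  have hsum : ∀ β : Fin i → ℝ, (fun z => ∑ j, β j * T (u j) z) = T (fun z => ∑ j, β j * u j z) := by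
    intro β
    have h1 : (fun z => ∑ j, β j * u j z) = ∑ j, β j • u j := by
      ext z; simp
    rw [h1, map_sum]
    ext z; simp
  refine ⟨fun j => T (u j), fun j => (hT _ (hu j)).1, ?_, ?_⟩
  · rw [Fintype.linearIndependent_iff] at hli ⊢
    intro β hβ
    apply hli
    by_contra hne
    have h1 : (fun z => ∑ j, β j * u j z) = ∑ j, β j • u j := by
      ext z; simp
    have ht := IsTestE.sum hu β
    have hp := int_sq_pos ht (by rw [h1]; exact hne)
    have h2 := (hT _ ht).2.1
    have h3 : T (fun z => ∑ j, β j * u j z) = 0 := by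
      rw [← hsum, ← hβ]; ext z; simp
    rw [h3] at h2
    simp at h2
    rcases h2 with h2 | h2
    · exact ha.ne' h2
    · exact hp.ne' h2
  · intro β
    have ht := IsTestE.sum hu β
    obtain ⟨_, h2, h3⟩ := hT _ ht
    have e1 : ∫ z, (∑ j, β j * T (u j) z)^2 = ∫ z, (T (fun z => ∑ j, β j * u j z) z)^2 := by
      rw [← hsum]
    rw [e1, hsum, h2, h3]
    have := mul_le_mul_of_nonneg_left (hc β) hb
    calc _ ≤ _ := this
      _ = _ := by field_simp

/-- Rearrangement of pieces. -/
def shuf {M : ℕ} (a : Fin M → EucN N) (B : Fin M → Set (EucN N)) :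
    (EucN N → ℝ) →ₗ[ℝ] (EucN N → ℝ) where
  toFun u := fun x => ∑ j, (B j).indicator (fun x => u (x + a j)) x
  map_add' u v := by
    ext x
    simp only [Pi.add_apply, ← Finset.sum_add_distrib]
    refine Finset.sum_congr rfl fun j _ => ?_
    by_cases h : x ∈ B j <;> simp [h]
  map_smul' c u := by
    ext x
    simp only [Pi.smul_apply, RingHom.id_apply, smul_eq_mul, Finset.mul_sum]
    refine Finset.sum_congr rfl fun j _ => ?_
    by_cases h : x ∈ B j <;> simp [h]

lemma shuf_apply {M : ℕ} (a : Fin M → EucN N) (B : Fin M → Set (EucN N)) (u x) :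
    shuf a B u x = ∑ j, (B j).indicator (fun x => u (x + a j)) x := rfl

lemma shuf_mem {M : ℕ} {a : Fin M → EucN N} {B : Fin M → Set (EucN N)}
    (hd : Pairwise (Function.onFun Disjoint B)) (u) {x} {j} (hx : x ∈ B j) :
    shuf a B u x = u (x + a j) := by
  rw [shuf_apply, Finset.sum_eq_single j]
  · simp [hx]
  · intro i _ hij
    exact indicator_of_notMem (fun h => (hd hij).le_bot ⟨h, hx⟩) _
  · simp

lemma shuf_notMem {M : ℕ} {a : Fin M → EucN N} {B : Fin M → Set (EucN N)}
    (u) {x} (hx : ∀ j, x ∉ B j) : shuf a B u x = 0 := by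
  rw [shuf_apply]; simp [hx]

lemma shuf_integral {M : ℕ} {a : Fin M → EucN N} {B : Fin M → Set (EucN N)}
    (hB : ∀ j, MeasurableSet (B j)) (C : Fin M → Set (EucN N)) (hC : ∀ j, MeasurableSet (C j))
    (hBC : ∀ j, B j = (fun x => x + a j) ⁻¹' (C j))
    (hd' : Pairwise (Function.onFun Disjoint C)) {g : EucN N → ℝ} (hg : Integrable g)
    (h0 : ∀ z, (∀ j, z ∉ C j) → g z = 0) :
    ∫ x, shuf a B g x = ∫ x, g x := by
  simp only [shuf_apply]
  have hind : ∀ j, (B j).indicator (fun x => g (x + a j)) =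
      fun x => (C j).indicator g (x + a j) := by
    intro j; ext x
    rw [hBC j]
    by_cases h : x + a j ∈ C j <;> simp [h]
  have hi : ∀ j, Integrable ((C j).indicator g) := fun j => hg.indicator (hC j)
  rw [integral_finsetSum]
  · simp_rw [hind]
    have : ∀ j, ∫ x, (C j).indicator g (x + a j) = ∫ x in C j, g x := by
      intro j
      rw [integral_add_right_eq_self (fun x => (C j).indicator g x), integral_indicator (hC j)]
    simp_rw [this]
    rw [← integral_iUnion_fintype hC hd' (fun j => hg.integrableOn)]
    apply setIntegral_eq_integral_of_forall_compl_eq_zero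
    intro x hx
    apply h0
    simpa using hx
  · intro j _
    rw [hind]
    exact (hi j).comp_add_right (a j)

lemma transplant_disj {M : ℕ} {ρ : ℝ} (y z : Fin M → EucN N)
    (hdy : Pairwise (Function.onFun Disjoint fun j => Metric.ball (y j) ρ))
    (hdz : Pairwise (Function.onFun Disjoint fun j => Metric.ball (z j) ρ))
    {U : Set (EucN N)} (hU : IsOpen U) (hcov : U ⊆ ⋃ j, Metric.ball (y j) ρ) :
    ∃ U' : Set (EucN N), IsOpen U' ∧ (U' ⊆ ⋃ j, Metric.ball (z j) ρ) ∧ volume U' = volume U ∧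
      ∀ i c, AdmE U i c → AdmE U' i c := by
  set a : Fin M → EucN N := fun j => y j - z j with ha
  set B : Fin M → Set (EucN N) := fun j => Metric.ball (z j) ρ with hBdef
  set C : Fin M → Set (EucN N) := fun j => Metric.ball (y j) ρ with hCdef
  have hBC : ∀ j, B j = (fun x => x + a j) ⁻¹' (C j) := by
    intro j; ext x
    simp only [hBdef, hCdef, ha, Metric.mem_ball, mem_preimage, dist_eq_norm]
    congr! 2
    abel_nf
  set U' : Set (EucN N) := ⋃ j, (fun x => x + a j) ⁻¹' (U ∩ C j) with hU'
  have hCo : ∀ j, IsOpen (C j) := fun j => Metric.isOpen_ball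
  have hBo : ∀ j, IsOpen (B j) := fun j => Metric.isOpen_ball
  have hpre : ∀ j, (fun x => x + a j) ⁻¹' (U ∩ C j) ⊆ B j := by
    intro j; rw [hBC]; exact preimage_mono inter_subset_right
  have hU'B : U' ⊆ ⋃ j, B j := iUnion_mono hpre
  refine ⟨U', isOpen_iUnion fun j => (hU.inter (hCo j)).preimage (by fun_prop), hU'B, ?_, ?_⟩
  · rw [hU', measure_iUnion]
    · simp_rw [measure_preimage_add_right]
      rw [← measure_iUnion]
      · congr 1
        rw [← inter_iUnion]; exact inter_eq_left.2 hcov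
      · intro i j hij
        exact (hdy hij).mono inter_subset_right inter_subset_right
      · intro j; exact (hU.inter (hCo j)).measurableSet
    · intro i j hij
      exact (hdz hij).mono (hpre i) (hpre j)
    · intro j; exact ((hU.inter (hCo j)).preimage (by fun_prop)).measurableSet
  · intro i c h
    have key : AdmE U' i (1/1 * c) := by
      refine adm_transfer one_pos zero_le_one (shuf a B) (fun u hu => ?_) h
      have hout : ∀ x, (∀ j, x ∉ C j) → x ∉ tsupport u := by
        intro x hx hxt
        have := hcov (hu.2.2 hxt)
        simp only [mem_iUnion] at this
        obtain ⟨j, hj⟩ := this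
        exact hx j hj
      have htest : IsTestE U' (shuf a B u) := by
        -- pieces
        have hpiece : ∀ j, IsTestE (U ∩ C j) ((C j).indicator u) := by
          intro j
          have hcl : IsClosed (tsupport u ∩ C j) := by
            have : tsupport u ∩ C j = tsupport u ∩ (⋃ i ∈ {i | i ≠ j}, C i)ᶜ := by
              ext x
              simp only [mem_inter_iff, mem_compl_iff, mem_iUnion, mem_ofPred_eq, not_exists]
              constructor
              · rintro ⟨h1, h2⟩
                exact ⟨h1, fun i hi hx => (hdy hi).le_bot ⟨hx, h2⟩⟩
              · rintro ⟨h1, h2⟩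
                refine ⟨h1, ?_⟩
                by_contra h3
                refine hout x (fun i hi => ?_) h1
                by_cases hij : i = j
                · subst hij; exact h3 hi
                · exact h2 i hij hi
            rw [this]
            exact (isClosed_tsupport u).inter (isOpen_biUnion fun i _ => hCo i).isClosed_compl
          have hts : tsupport ((C j).indicator u) ⊆ tsupport u ∩ C j := by
            apply closure_minimal _ hcl
            intro x hx
            rw [Function.mem_support, indicator_apply_ne_zero] at hx
            exact ⟨subset_tsupport u hx.2, hx.1⟩
          refine ⟨?_, ?_, fun x hx => ⟨hu.2.2 (hts hx).1, (hts hx).2⟩⟩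
          · rw [contDiff_iff_contDiffAt]
            intro x
            by_cases hx : x ∉ tsupport ((C j).indicator u)
            · exact contDiffAt_const.congr_of_eventuallyEq (notMem_tsupport_iff_eventuallyEq.1 hx)
            rw [not_not] at hx
            have hxC := (hts hx).2
            refine hu.1.contDiffAt.congr_of_eventuallyEq ?_
            filter_upwards [(hCo j).mem_nhds hxC] with w hw
            simp [hw]
          · exact hu.2.1.of_isClosed_subset (isClosed_tsupport _) (hts.trans inter_subset_left)
        have hsh : shuf a B u = ∑ j, fun x => (C j).indicator u (x + a j) := by
          ext x
          rw [shuf_apply, Finset.sum_apply]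
          refine Finset.sum_congr rfl fun j _ => ?_
          rw [hBC j]
          by_cases h : x + a j ∈ C j <;> simp [h]
        rw [hsh, ← mem_testSub]
        refine Submodule.sum_mem _ fun j _ => ?_
        rw [mem_testSub]
        have hts : tsupport (fun x => (C j).indicator u (x + a j)) ⊆
            (fun x => x + a j) ⁻¹' (tsupport ((C j).indicator u)) := by
          apply closure_minimal
          · intro x hx
            exact subset_tsupport ((C j).indicator u) (a := x + a j) hx
          · exact (isClosed_tsupport _).preimage (by fun_prop)
        refine ⟨(hpiece j).1.comp (by fun_prop), ?_, ?_⟩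
        · exact (hpiece j).2.1.comp_homeomorph (Homeomorph.addRight (a j))
        · refine (hts.trans (preimage_mono (hpiece j).2.2)).trans ?_
          exact subset_iUnion (fun j => (fun x => x + a j) ⁻¹' (U ∩ C j)) j
      have hsq : ∀ x, (shuf a B u x)^2 = shuf a B (fun x => (u x)^2) x := by
        intro x
        by_cases hx : ∃ j, x ∈ B j
        · obtain ⟨j, hj⟩ := hx
          rw [shuf_mem hdz _ hj, shuf_mem hdz _ hj]
        · push Not at hx
          rw [shuf_notMem _ hx, shuf_notMem _ hx]; simp
      have hgr : ∀ x, gradSqE (shuf a B u) x = shuf a B (gradSqE u) x := by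
        intro x
        by_cases hx : ∃ j, x ∈ B j
        · obtain ⟨j, hj⟩ := hx
          rw [shuf_mem hdz _ hj]
          have he : shuf a B u =ᶠ[nhds x] fun x => u (x + a j) := by
            filter_upwards [(hBo j).mem_nhds hj] with w hw
            exact shuf_mem hdz _ hw
          unfold gradSqE
          rw [he.fderiv_eq, fderiv_comp_add_right]
        · push Not at hx
          rw [shuf_notMem _ hx]
          have : x ∉ tsupport (shuf a B u) := by
            intro hxt
            have := hU'B (htest.2.2 hxt)
            simp only [mem_iUnion] at this
            obtain ⟨j, hj⟩ := this
            exact hx j hj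
          rw [gradSqE_eq]
          exact gInE_zero_of_notMem this
      refine ⟨htest, ?_, ?_⟩
      · simp_rw [hsq]
        rw [shuf_integral (fun j => (hBo j).measurableSet) C (fun j => (hCo j).measurableSet) hBC hdy
          (int_sq hu), one_mul]
        intro x hx
        simp [image_eq_zero_of_notMem_tsupport (hout x hx)]
      · simp_rw [hgr]
        rw [shuf_integral (fun j => (hBo j).measurableSet) C (fun j => (hCo j).measurableSet) hBC hdy
          (int_gradSq hu), one_mul]
        intro x hx
        rw [gradSqE_eq]
        exact gInE_zero_of_notMem (hout x hx)
    simpa using key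

theorem transplant (hN : 2 ≤ N) (M : ℕ) : ∀ ρ : ℝ, 0 < ρ → ∃ R : ℝ, 0 < R ∧
    ∀ (U : Set (EucN N)) (y : Fin M → EucN N), IsOpen U → (U ⊆ ⋃ j, Metric.ball (y j) ρ) →
    ∃ U' : Set (EucN N), IsOpen U' ∧ U' ⊆ Metric.ball 0 R ∧ volume U' = volume U ∧
      ∀ i c, AdmE U i c → AdmE U' i c := by
  -- separated case
  have sep : ∀ (M : ℕ) (ρ : ℝ), 0 < ρ → ∀ (U : Set (EucN N)) (y : Fin M → EucN N), IsOpen U →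
      (U ⊆ ⋃ j, Metric.ball (y j) ρ) → (∀ i j, i ≠ j → 2 * ρ ≤ dist (y i) (y j)) →
      ∃ U' : Set (EucN N), IsOpen U' ∧ U' ⊆ Metric.ball 0 (2 * ρ * M + ρ) ∧ volume U' = volume U ∧
      ∀ i c, AdmE U i c → AdmE U' i c := by
    intro M ρ hρ U y hU hcov hs
    let p0 : Fin N := ⟨0, by omega⟩
    let z : Fin M → EucN N := fun j => EuclideanSpace.single p0 (2 * ρ * (j.1 : ℝ))
    obtain ⟨U', h1, h2, h3, h4⟩ := transplant_disj (ρ := ρ) y z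
      (fun i j hij => Metric.ball_disjoint_ball (by have := hs i j hij; linarith))
      (fun i j hij => Metric.ball_disjoint_ball (by
        simp only [z]
        rw [EuclideanSpace.dist_single_same, Real.dist_eq, ← mul_sub, abs_mul, abs_of_pos (by positivity : 0 < 2*ρ)]
        have h1 : (1:ℝ) ≤ |(i.1:ℝ) - (j.1:ℝ)| := by
          have h2 : (1:ℤ) ≤ |(i.1:ℤ) - (j.1:ℤ)| := by
            apply Int.one_le_abs
            have := fun h => hij (Fin.ext h)
            omega
          exact_mod_cast h2
        nlinarith)) hU hcov
    refine ⟨U', h1, h2.trans ?_, h3, h4⟩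
    refine iUnion_subset fun j => Metric.ball_subset_ball' ?_
    rw [dist_zero_right]
    simp only [z]
    rw [EuclideanSpace.norm_single, Real.norm_of_nonneg (by positivity)]
    have : (j.1:ℝ) ≤ M := by exact_mod_cast j.2.le
    nlinarith
  induction M with
  | zero =>
    intro ρ hρ
    refine ⟨2 * ρ * (0:ℕ) + ρ, by positivity, fun U y hU hcov => sep 0 ρ hρ U y hU hcov ?_⟩
    intro i; exact i.elim0
  | succ M ih =>
    intro ρ hρ
    obtain ⟨R, hR, h⟩ := ih (3*ρ) (by positivity)
    refine ⟨max R (2 * ρ * (M+1:ℕ) + ρ), lt_max_of_lt_left hR, fun U y hU hcov => ?_⟩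
    by_cases hs : ∀ i j, i ≠ j → 2 * ρ ≤ dist (y i) (y j)
    · obtain ⟨U', h1, h2, h3⟩ := sep _ ρ hρ U y hU hcov hs
      exact ⟨U', h1, h2.trans (Metric.ball_subset_ball (le_max_right _ _)), h3⟩
    · push Not at hs
      obtain ⟨i, j, hij, hlt⟩ := hs
      obtain ⟨U', h1, h2, h3⟩ := h U (fun l => y (j.succAbove l)) hU (by
        refine hcov.trans (iUnion_subset fun l => ?_)
        by_cases hl : l = j
        · obtain ⟨m, hm⟩ := Fin.exists_succAbove_eq hij
          refine subset_trans ?_ (subset_iUnion _ m)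
          rw [hm, hl]
          refine Metric.ball_subset_ball' ?_
          rw [dist_comm]; linarith
        · obtain ⟨m, hm⟩ := Fin.exists_succAbove_eq hl
          refine subset_trans ?_ (subset_iUnion _ m)
          rw [hm]
          exact Metric.ball_subset_ball (by linarith))
      exact ⟨U', h1, h2.trans (Metric.ball_subset_ball (le_max_left _ _)), h3⟩



/-- Dilation of functions. -/
def dil (r : ℝ) : (EucN N → ℝ) →ₗ[ℝ] (EucN N → ℝ) where
  toFun u := fun x => u (r⁻¹ • x)
  map_add' u v := rfl
  map_smul' c u := rfl

lemma dil_apply (r : ℝ) (u : EucN N → ℝ) (x : EucN N) : dil r u x = u (r⁻¹ • x) := rfl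

lemma adm_scale {U : Set (EucN N)} {r c : ℝ} (hr : 0 < r) {i : ℕ} (h : AdmE U i c) :
    AdmE ((fun x : EucN N => r⁻¹ • x) ⁻¹' U) i (c / r^2) := by
  have key : AdmE ((fun x : EucN N => r⁻¹ • x) ⁻¹' U) i (((r⁻¹)^2 * r^N) / r^N * c) := by
    refine adm_transfer (by positivity) (by positivity) (dil r) (fun u hu => ?_) h
    have hintg : ∀ f : EucN N → ℝ, ∫ x, f (r⁻¹ • x) = r^N * ∫ x, f x := by
      intro f
      rw [Measure.integral_comp_inv_smul, finrank_euclideanSpace_fin, abs_of_pos (by positivity), smul_eq_mul]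
    refine ⟨⟨hu.1.comp (by fun_prop), ?_, ?_⟩, ?_, ?_⟩
    · exact hu.2.1.comp_homeomorph (Homeomorph.smulOfNeZero r⁻¹ (by positivity))
    · have hts : tsupport (dil r u) ⊆ (fun x : EucN N => r⁻¹ • x) ⁻¹' (tsupport u) := by
        apply closure_minimal
        · intro x hx
          exact subset_tsupport u (a := r⁻¹ • x) hx
        · exact (isClosed_tsupport _).preimage (by fun_prop)
      exact hts.trans (preimage_mono hu.2.2)
    · exact hintg (fun x => (u x)^2)
    · have hg : ∀ x, gradSqE (dil r u) x = (fun x => (r⁻¹)^2 * gradSqE u x) (r⁻¹ • x) := by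
        intro x
        unfold gradSqE
        have : fderiv ℝ (dil r u) x = r⁻¹ • fderiv ℝ u (r⁻¹ • x) := by
          exact fderiv_comp_smul (f := u) r⁻¹ (x := x)
        rw [this]
        simp only [ContinuousLinearMap.smul_apply, smul_eq_mul, mul_pow, Finset.mul_sum]
      simp_rw [hg]
      rw [hintg (fun x => (r⁻¹)^2 * gradSqE u x), integral_const_mul]
      ring
  convert key using 1
  field_simp

lemma exists_adm (hN : 2 ≤ N) {Ω : Set (EucN N)} (hΩ : IsOpen Ω) (hne : Ω.Nonempty) (k : ℕ) :
    ∃ c, AdmE Ω k c := by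
  obtain ⟨x0, hx0⟩ := hne
  obtain ⟨δ, hδ, hball⟩ := Metric.isOpen_iff.1 hΩ x0 hx0
  let p0 : Fin N := ⟨0, by omega⟩
  set s : ℝ := δ / (3 * (k+1)) with hs
  have hs0 : 0 < s := by positivity
  have hδs : δ = 3 * s * (k+1) := by rw [hs]; field_simp
  let x : Fin k → EucN N := fun j => x0 + EuclideanSpace.single p0 (3 * s * (j.1 : ℝ))
  let f : ∀ j : Fin k, ContDiffBump (x j) := fun j => ⟨s/2, s, by positivity, by linarith⟩
  have hsep : ∀ i j, i ≠ j → 3 * s ≤ dist (x i) (x j) := by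
    intro i j hij
    simp only [x, dist_add_left]
    rw [EuclideanSpace.dist_single_same, Real.dist_eq, ← mul_sub, abs_mul, abs_of_pos (by positivity : 0 < 3*s)]
    have h1 : (1:ℝ) ≤ |(i.1:ℝ) - (j.1:ℝ)| := by
      have h2 : (1:ℤ) ≤ |(i.1:ℤ) - (j.1:ℤ)| := by
        apply Int.one_le_abs
        have := fun h => hij (Fin.ext h)
        omega
      exact_mod_cast h2
    nlinarith
  have hzero : ∀ i z, s ≤ dist z (x i) → f i z = 0 := fun i z h => (f i).zero_of_le_dist h
  have hprod : ∀ i j, i ≠ j → ∀ z, f i z * f j z = 0 := by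
    intro i j hij z
    by_cases h : s ≤ dist z (x i)
    · rw [hzero i z h, zero_mul]
    · rw [hzero j z, mul_zero]
      have := hsep i j hij
      have h2 := dist_triangle_left (x i) (x j) z
      linarith
  let u : Fin k → EucN N → ℝ := fun j => f j
  have hu : ∀ j, IsTestE Ω (u j) := by
    intro j
    refine ⟨(f j).contDiff, (f j).hasCompactSupport, ?_⟩
    rw [(f j).tsupport_eq]
    refine subset_trans ?_ hball
    refine (Metric.closedBall_subset_ball' (ε₂ := δ) ?_)
    change s + _ < δ
    simp only [x]
    rw [dist_self_add_left, EuclideanSpace.norm_single, Real.norm_of_nonneg (by positivity), hδs]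
    have : (j.1:ℝ) ≤ k := by exact_mod_cast j.2.le
    nlinarith
  have hctr : ∀ j, u j (x j) = 1 := fun j => (f j).one_of_mem_closedBall (Metric.mem_closedBall_self (f j).rIn_pos.le)
  have hpos : ∀ j, 0 < ∫ z, (u j z)^2 := fun j => int_sq_pos (hu j) (fun h => by
    have := hctr j; rw [h] at this; simp at this)
  have hQ : ∀ β : Fin k → ℝ, ∫ z, (∑ j, β j * u j z)^2 = ∑ j, (β j)^2 * ∫ z, (u j z)^2 := by
    intro β
    rw [int_comb_sq hu β]
    refine Finset.sum_congr rfl fun i _ => ?_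
    rw [Finset.sum_eq_single i]
    · simp only [sq]
    · intro j _ hji
      have : ∀ z, u i z * u j z = 0 := hprod i j hji.symm
      simp [this]
    · simp
  refine ⟨(∑ j, 1 / ∫ z, (u j z)^2) * (∑ j, ∫ z, gradSqE (u j) z), u, hu, ?_, ?_⟩
  · rw [Fintype.linearIndependent_iff]
    intro β hβ j
    have h1 := congrFun hβ (x j)
    rw [Finset.sum_apply, Finset.sum_eq_single j] at h1
    · simpa [hctr] using h1
    · intro i _ hij
      have h2 := hprod i j hij (x j)
      have h3 : f j (x j) = 1 := hctr j
      rw [h3, mul_one] at h2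
      simp [u, h2]
    · simp
  · intro β
    rw [hQ β]
    have hn : ∀ i, 0 ≤ (β i)^2 * ∫ z, (u i z)^2 := fun i => mul_nonneg (sq_nonneg _) (hpos i).le
    have h1 : ∑ j, (β j)^2 ≤ (∑ j, 1 / ∫ z, (u j z)^2) * ∑ j, (β j)^2 * ∫ z, (u j z)^2 := by
      rw [Finset.sum_mul]
      refine Finset.sum_le_sum fun j _ => ?_
      rw [div_mul_eq_mul_div, one_mul, le_div_iff₀ (hpos j)]
      exact Finset.single_le_sum (f := fun j => (β j)^2 * ∫ z, (u j z)^2) (fun i _ => hn i) (Finset.mem_univ j)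
    have h2 : ∫ z, gradSqE (fun z => ∑ j, β j * u j z) z ≤ (∑ j, (β j)^2) * ∑ j, ∫ z, gradSqE (u j) z := by
      rw [← integral_finsetSum _ (fun j _ => int_gradSq (hu j)), ← integral_const_mul]
      refine integral_mono (int_gradSq (IsTestE.sum hu β))
        ((integrable_finsetSum _ (fun j _ => int_gradSq (hu j))).const_mul _) (fun z => ?_)
      exact comb_grad_le (fun j => (hu j).1) β z
    have hG : 0 ≤ ∑ j, ∫ z, gradSqE (u j) z :=
      Finset.sum_nonneg fun j _ => integral_nonneg fun z => gradSqE_nonneg _ _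
    have h3 := mul_le_mul_of_nonneg_right h1 hG
    calc _ ≤ _ := h2
      _ ≤ _ := h3
      _ = _ := by ring


/-- Proposition `allhere`. For every `K > 0` there is a constant
`R = R(k,K,N)` such that: if `Ω ⊆ ℝ^N` is an open set of unit volume with `λ_k(Ω) ≤ K`,
there exists another open set `Ω̂`, still of unit volume but contained in a cube of side
`R`, with `λ_i(Ω̂) ≤ λ_i(Ω)` for every `1 ≤ i ≤ k`. -/
theorem exists_bounded_replacement
    (N k : ℕ) (hN : 2 ≤ N) (hk : 1 ≤ k) (K : ℝ) (hK : 0 < K) :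
    ∃ R : ℝ, 0 < R ∧
      ∀ Ω : Set (EucN N), IsOpen Ω → volume Ω = 1 → eigenvalE Ω k ≤ K →
      ∃ Ωh : Set (EucN N), IsOpen Ωh ∧ volume Ωh = 1 ∧
        (∃ c : EucN N, Ωh ⊆ {z | ∀ p : Fin N, z p ∈ Icc (c p) (c p + R)}) ∧
        ∀ i : Fin k, eigenvalE Ωh (i.1 + 1) ≤ eigenvalE Ω (i.1 + 1) := by
  obtain ⟨M, ρ, hρ, hcr⟩ := cover_reduction hN k K hK
  obtain ⟨R1, hR1, htr⟩ := transplant hN M ρ hρ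
  obtain ⟨C, hC, hP⟩ := poincare_small hN
  set D : ℝ := C * (2 * K + 1) with hD
  have hD0 : 0 < D := by positivity
  set R' : ℝ := R1 * Real.sqrt D with hR'
  have hR'0 : 0 < R' := by positivity
  refine ⟨2 * R', by positivity, fun Ω hΩ hv hlam => ?_⟩
  have hne : Ω.Nonempty := by
    by_contra h
    rw [not_nonempty_iff_eq_empty] at h
    rw [h] at hv; simp at hv
  obtain ⟨Ω', y, hO, hsub, hcov, hadm⟩ := hcr Ω hΩ hv (exists_adm hN hΩ hne k) hlam
  obtain ⟨U', hU'o, hU'b, hU'v, hU'a⟩ := htr Ω' y hO hcov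
  set t : ℝ := (volume Ω').toReal with ht
  have hfin : volume Ω' ≠ ∞ := by
    have : volume Ω' ≤ 1 := hv ▸ measure_mono hsub
    exact (this.trans_lt ENNReal.one_lt_top).ne
  have ht0 : 0 ≤ t := ENNReal.toReal_nonneg
  have htv : volume Ω' = ENNReal.ofReal t := (ENNReal.ofReal_toReal hfin).symm
  have hN0 : (N : ℝ) ≠ 0 := by
    have : N ≠ 0 := by omega
    exact_mod_cast this
  have hlow : 1 ≤ t ^ ((2:ℝ)/N) * D := by
    obtain ⟨c, hc, hc2, -⟩ := hadm ⟨0, hk⟩ 1 one_pos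
    have h1 := adm_one_lower hC hP ht0 htv.le hc
    have h2 : 0 ≤ C * t ^ ((2:ℝ)/N) := mul_nonneg hC.le (Real.rpow_nonneg ht0 _)
    have h3 := mul_le_mul_of_nonneg_left hc2 h2
    rw [hD]
    linarith
  have htpos : 0 < t := by
    rcases ht0.lt_or_eq with h | h
    · exact h
    · rw [← h, Real.zero_rpow (div_ne_zero two_ne_zero hN0)] at hlow
      linarith
  set s : ℝ := t ^ ((1:ℝ)/N) with hs
  have hs0 : 0 < s := Real.rpow_pos_of_pos htpos _
  have hsN : s ^ N = t := by
    rw [hs, ← Real.rpow_natCast, ← Real.rpow_mul ht0, one_div, inv_mul_cancel₀ hN0, Real.rpow_one]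
  have hs2 : s ^ 2 = t ^ ((2:ℝ)/N) := by
    rw [hs, ← Real.rpow_natCast, ← Real.rpow_mul ht0]
    congr 1
    push_cast
    ring
  have hsD : 1 ≤ s * Real.sqrt D := by
    rw [← hs2] at hlow
    have h1 : (s * Real.sqrt D)^2 = s^2 * D := by rw [mul_pow, Real.sq_sqrt hD0.le]
    have h2 : 0 ≤ s * Real.sqrt D := by positivity
    nlinarith
  have hrinv : (s⁻¹)⁻¹ = s := inv_inv s
  refine ⟨(fun x : EucN N => s • x) ⁻¹' U', hU'o.preimage (by fun_prop), ?_, ?_, ?_⟩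
  · rw [Measure.addHaar_preimage_smul _ hs0.ne', finrank_euclideanSpace_fin, hsN, hU'v, htv,
      ← ENNReal.ofReal_mul (abs_nonneg _), abs_of_pos (by positivity), inv_mul_cancel₀ htpos.ne',
      ENNReal.ofReal_one]
  · refine ⟨WithLp.toLp 2 (fun _ => -R'), fun z hz p => ?_⟩
    have h1 : ‖s • z‖ < R1 := by simpa using hU'b hz
    rw [norm_smul, Real.norm_of_nonneg hs0.le] at h1
    have h2 : ‖z‖ ≤ R' := by
      have h3 : 0 ≤ ‖z‖ := norm_nonneg z
      have h4 : 0 < Real.sqrt D := Real.sqrt_pos.2 hD0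
      calc ‖z‖ = 1 * ‖z‖ := (one_mul _).symm
        _ ≤ (s * Real.sqrt D) * ‖z‖ := by gcongr
        _ = (s * ‖z‖) * Real.sqrt D := by ring
        _ ≤ R1 * Real.sqrt D := by gcongr
    have h3 : |z p| ≤ R' := by
      have := PiLp.norm_apply_le z p
      rw [Real.norm_eq_abs] at this
      exact this.trans h2
    rw [abs_le] at h3
    simp only [mem_Icc]
    constructor <;> linarith [h3.1, h3.2]
  · intro i
    refine le_of_forall_pos_le_add fun ε hε => ?_
    obtain ⟨c, hc, -, hc3⟩ := hadm i ε hε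
    have h1 := adm_scale (inv_pos.2 hs0) (hU'a _ _ hc)
    rw [hrinv] at h1
    refine (eigenvalE_le h1).trans ?_
    rw [← hs2] at hc3
    calc c / (s⁻¹)^2 = c * s^2 := by field_simp
      _ ≤ _ := hc3

end SpectralMin
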